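/- Let (λ⁺, λ⁻) be a bipartition with ℓ(λ⁺) + ℓ(λ⁻) ≤ m < n. Then the restriction of V_n(λ⁺,λ⁻) from GL_n(ℂ) to GL_m(ℂ) × GL_{n-m}(ℂ) contains V_m(λ⁺,λ⁻) ⊗ (trivial representation of GL_{n-m}(ℂ)) with multiplicity exactly one; equivalently, the GL_{n-m}(ℂ)-invariant subspace of V_n(λ⁺,λ⁻) contains a unique copy of V_m(λ⁺,λ⁻) as a GL_m(ℂ)-representation. -/

import Mathlib

open Matrix

noncomputable section

/-- The diagonal torus element of `GL_n(ℂ)` with diagonal entries `t i`. -/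
def diagGL {n : ℕ} (t : Fin n → ℂˣ) : GL (Fin n) ℂ :=
  ⟨Matrix.diagonal fun i => (t i : ℂ), Matrix.diagonal fun i => (((t i)⁻¹ : ℂˣ) : ℂ),
    by simp [Matrix.diagonal_mul_diagonal, ← Units.val_mul],
    by simp [Matrix.diagonal_mul_diagonal, ← Units.val_mul]⟩

/-- An element of `GL_n(ℂ)` is upper unitriangular. -/
def IsUnitri {n : ℕ} (g : GL (Fin n) ℂ) : Prop :=
  (∀ i, (g : Matrix (Fin n) (Fin n) ℂ) i i = 1) ∧
    ∀ i j : Fin n, j < i → (g : Matrix (Fin n) (Fin n) ℂ) i j = 0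

/-- The number of positive entries of an integral weight `ω`; for a dominant weight
labeled by a bipartition `(λ⁺, λ⁻)` this is the length `ℓ(λ⁺)`. -/
def lenPos {n : ℕ} (ω : Fin n → ℤ) : ℕ := (Finset.univ.filter fun i => 0 < ω i).card

/-- The number of negative entries of an integral weight `ω`; for a dominant weight
labeled by a bipartition `(λ⁺, λ⁻)` this is the length `ℓ(λ⁻)`. -/
def lenNeg {n : ℕ} (ω : Fin n → ℤ) : ℕ := (Finset.univ.filter fun i => ω i < 0).card

/-- `ρ` is (a model of) the irreducible representation `V_n(λ⁺,λ⁻)` of `GL_n(ℂ)` with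
highest weight the antitone integer vector `ω = (λ⁺, 0, …, 0, −λ⁻)`: it is finite
dimensional and irreducible, and it has a nonzero highest weight vector fixed by the
upper unitriangular subgroup on which the diagonal torus acts by the character `ω`. -/
structure IsHWRep (n : ℕ) {V : Type*} [AddCommGroup V] [Module ℂ V]
    (ρ : GL (Fin n) ℂ →* (V →ₗ[ℂ] V)ˣ) (ω : Fin n → ℤ) : Prop where
  finite : FiniteDimensional ℂ V
  dominant : Antitone ω
  irred : ∀ W : Submodule ℂ V,
    (∀ g : GL (Fin n) ℂ, ∀ v ∈ W, (ρ g : V →ₗ[ℂ] V) v ∈ W) → W = ⊥ ∨ W = ⊤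
  exists_hw : ∃ v : V, v ≠ 0 ∧
    (∀ g : GL (Fin n) ℂ, IsUnitri g → (ρ g : V →ₗ[ℂ] V) v = v) ∧
    ∀ t : Fin n → ℂˣ,
      (ρ (diagGL t) : V →ₗ[ℂ] V) v = (∏ i, (t i : ℂ) ^ (ω i)) • v

/-- Block-diagonal embedding `A ↦ diag(A, 1)` as a multiplicative monoid map on matrices. -/
def blockTLHom (m k : ℕ) :
    Matrix (Fin m) (Fin m) ℂ →* Matrix (Fin (m + k)) (Fin (m + k)) ℂ where
  toFun A := Matrix.reindex finSumFinEquiv finSumFinEquiv (Matrix.fromBlocks A 0 0 1)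
  map_one' := by simp [Matrix.fromBlocks_one]
  map_mul' A B := by
    simp only [Matrix.reindex_apply, Matrix.submatrix_mul_equiv,
      Matrix.fromBlocks_multiply]
    simp

/-- Block-diagonal embedding `A ↦ diag(1, A)` as a multiplicative monoid map on matrices. -/
def blockBRHom (m k : ℕ) :
    Matrix (Fin k) (Fin k) ℂ →* Matrix (Fin (m + k)) (Fin (m + k)) ℂ where
  toFun A := Matrix.reindex finSumFinEquiv finSumFinEquiv (Matrix.fromBlocks 1 0 0 A)
  map_one' := by simp [Matrix.fromBlocks_one]
  map_mul' A B := by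
    simp only [Matrix.reindex_apply, Matrix.submatrix_mul_equiv,
      Matrix.fromBlocks_multiply]
    simp

/-- The top-left block embedding `GL_m(ℂ) → GL_{m+k}(ℂ)`. -/
def embTL (m k : ℕ) : GL (Fin m) ℂ →* GL (Fin (m + k)) ℂ := Units.map (blockTLHom m k)

/-- The bottom-right block embedding `GL_k(ℂ) → GL_{m+k}(ℂ)`. -/
def embBR (m k : ℕ) : GL (Fin k) ℂ →* GL (Fin (m + k)) ℂ := Units.map (blockBRHom m k)

/-- The truncation of a dominant weight on `GL_{m+k}` labeled by a bipartition
`(λ⁺, λ⁻)` with `ℓ(λ⁺) + ℓ(λ⁻) ≤ m` to the dominant weight on `GL_m` labeled by the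
same bipartition. -/
def restrWeight (m k : ℕ) (ω : Fin (m + k) → ℤ) : Fin m → ℤ := fun i =>
  if (i : ℕ) < lenPos ω then ω ⟨(i : ℕ), by have := i.isLt; omega⟩
  else if m - lenNeg ω ≤ (i : ℕ) then ω ⟨(i : ℕ) + k, by have := i.isLt; omega⟩
  else 0

end

/-!
A copy of `V_m(λ⁺,λ⁻) ⊗ 1` in the restriction is determined by the image of its highest weight
vector, a `GL_{n-m}`-invariant vector of weight `(λ⁺, 0, …, 0, −λ⁻ | 0, …, 0)`. This weight is a
permutation `ω ∘ s` of the highest weight `ω`: since `ℓ(λ⁺) + ℓ(λ⁻) ≤ m`, the permutation `s` only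
moves `n - m` zeros of `ω` to the end. As the `ω`-weight space is a line spanned by the highest
weight vector `v`, the `ω ∘ s`-weight space is the line spanned by `s⁻¹ v`, so the multiplicity is
at most one. As `s` is increasing on each of the two blocks, `s⁻¹ v` is a highest weight vector for
`GL_m` and, of weight `0`, for `GL_{n-m}`.

In a semisimple representation a highest weight vector generates an irreducible one, determined up
to isomorphism by its weight; so `s⁻¹ v` generates a copy of `V_m(λ⁺,λ⁻)` and is fixed by
`GL_{n-m}`. Semisimplicity of the restriction comes from Weyl's unitary trick: `V_n(λ⁺,λ⁻)` embeds
into a tensor product of exterior and determinant powers, on which the conjugate transpose acts by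
the Hermitian adjoint, so that orthogonal complements are stable.

No topology on `GL_n` and no Lie algebra is needed: the transvection `1 + a E_{ij}` is conjugate by
the torus to all its positive powers, hence acts unipotently, and its powers act polynomially.
-/

section UnipotentPowers

variable {K V : Type*} [Field K] [AddCommGroup V] [Module K V]

theorem isNilpotent_of_spectrum_subset_zero [IsAlgClosed K] [FiniteDimensional K V]
    {A : Module.End K V} (h : spectrum K A ⊆ {0}) : IsNilpotent A := by
  have h_top : A.maxGenEigenspace 0 = ⊤ := by
    rw [eq_top_iff, ← Module.End.iSup_maxGenEigenspace_eq_top A]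
    refine iSup_le fun μ => ?_
    rcases eq_or_ne μ 0 with rfl | hμ
    · exact le_rfl
    · have hμ' : ¬ A.HasUnifEigenvalue μ ⊤ := fun hA =>
        hμ (h (Module.End.hasEigenvalue_iff_mem_spectrum.1 (hA.lt one_pos)))
      exact (not_not.1 hμ').le.trans bot_le
  rw [Module.End.maxGenEigenspace_eq_genEigenspace_finrank] at h_top
  refine ⟨Module.finrank K V, LinearMap.ext fun x => ?_⟩
  have hx : x ∈ A.genEigenspace 0 (Module.finrank K V) := h_top ▸ Submodule.mem_top
  simpa only [zero_smul, sub_zero, LinearMap.mem_ker] using! Module.End.mem_genEigenspace_nat.1 hx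

theorem exists_pow_eq_one_of_forall_pow_mem {s : Set K} (hs : s.Finite)
    (h_pow : ∀ x ∈ s, ∀ N : ℕ, 0 < N → x ^ N ∈ s) {x : K} (hx : x ∈ s) (hx0 : x ≠ 0) :
    ∃ N : ℕ, 0 < N ∧ x ^ N = 1 := by
  obtain ⟨i, -, j, -, hij, h⟩ := Set.infinite_univ.exists_lt_map_eq_of_mapsTo
    (f := fun N : ℕ => x ^ (N + 1)) (fun N _ => h_pow x hx _ N.succ_pos) hs
  refine ⟨j - i, Nat.sub_pos_of_lt hij, ?_⟩
  apply mul_left_cancel₀ (pow_ne_zero (i + 1) hx0)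
  rw [mul_one, ← pow_add, h]
  congr 1
  omega

theorem isNilpotent_sub_one_of_forall_isConj_pow [IsAlgClosed K] [FiniteDimensional K V]
    {A : Module.End K V} (hA : IsUnit A) (h_conj : ∀ N : ℕ, 0 < N → IsConj A (A ^ N)) :
    IsNilpotent (A - 1) := by
  have h_fin : (spectrum K A).Finite := Module.End.finite_spectrum A
  have h_image (N : ℕ) (hN : 0 < N) : (· ^ N) '' spectrum K A = spectrum K A := by
    obtain ⟨c, hc⟩ := h_conj N hN
    rw [← spectrum.map_pow_of_pos A hN, ← spectrum.units_conjugate (a := A) (u := c), hc.eq,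
      Units.mul_inv_cancel_right]
  have h_order (x : K) (hx : x ∈ spectrum K A) : ∃ N : ℕ, 0 < N ∧ x ^ N = 1 := by
    refine exists_pow_eq_one_of_forall_pow_mem h_fin
      (fun y hy N hN => h_image N hN ▸ Set.mem_image_of_mem _ hy) hx ?_
    rintro rfl
    exact (spectrum.zero_mem_iff K).1 hx hA
  choose! o ho_pos ho_one using h_order
  have h_spec : spectrum K A ⊆ {1} := by
    rw [← h_image (∏ x ∈ h_fin.toFinset, o x)
      (Finset.prod_pos fun x hx => ho_pos x (h_fin.mem_toFinset.1 hx))]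
    rintro _ ⟨x, hx, rfl⟩
    obtain ⟨q, hq⟩ := Finset.dvd_prod_of_mem o (h_fin.mem_toFinset.2 hx)
    simp only [hq, pow_mul, ho_one x hx, one_pow, Set.mem_singleton_iff]
  refine isNilpotent_of_spectrum_subset_zero fun z hz => ?_
  have hz1 : z + 1 ∈ spectrum K A := by
    simpa using (spectrum.add_mem_add_iff (R := K) (a := A - 1) (r := z) (s := 1)).2 hz
  simpa using h_spec hz1

theorem exists_polynomial_eval_eq_choose (K : Type*) [Field K] [CharZero K] (j : ℕ) :
    ∃ p : Polynomial K, p.natDegree ≤ j ∧ ∀ r : ℕ, p.eval (r : K) = r.choose j := by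
  refine ⟨Polynomial.C ((j.factorial : K)⁻¹) * descPochhammer K j, ?_, fun r => ?_⟩
  · exact (Polynomial.natDegree_C_mul_le _ _).trans (descPochhammer_natDegree K j).le
  · rw [Nat.cast_choose_eq_descPochhammer_div, Polynomial.eval_C_mul, div_eq_inv_mul]

theorem pow_eq_sum_choose_nsmul_of_sub_one_pow_eq_zero {R : Type*} [Ring R] {a : R} {d : ℕ}
    (hd : (a - 1) ^ d = 0) (r : ℕ) :
    a ^ r = ∑ i ∈ Finset.range d, r.choose i • (a - 1) ^ i := by
  have h_binomial : a ^ r = ∑ i ∈ Finset.range (r + 1), r.choose i • (a - 1) ^ i := by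
    conv_lhs => rw [← sub_add_cancel a 1, (Commute.one_right (a - 1)).add_pow]
    simp only [one_pow, mul_one, nsmul_eq_mul, (Nat.cast_commute _ _).eq]
  rw [h_binomial, Finset.sum_subset (Finset.range_mono (Nat.le_add_right (r + 1) d)),
    ← Finset.sum_subset (Finset.range_mono (Nat.le_add_left d (r + 1)))]
  · intro i _ hi
    rw [pow_eq_zero_of_le (not_lt.1 (Finset.mem_range.not.1 hi)) hd, smul_zero]
  · intro i _ hi
    rw [Nat.choose_eq_zero_of_lt (not_le.1 fun h => hi (Finset.mem_range_succ_iff.2 h)),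
      zero_smul]

variable [CharZero K]

theorem exists_forall_pow_apply_eq_sum {A : Module.End K V} (hA : IsNilpotent (A - 1)) (x : V) :
    ∃ (d : ℕ) (y : ℕ → V), ∀ r : ℕ, (A ^ r) x = ∑ j ∈ Finset.range d, (r : K) ^ j • y j := by
  obtain ⟨d, hd⟩ := hA
  choose p hp_deg hp_eval using exists_polynomial_eval_eq_choose K
  refine ⟨d, fun j => ∑ i ∈ Finset.range d, (p i).coeff j • ((A - 1) ^ i) x, fun r => ?_⟩
  have h_choose (i : ℕ) (hi : i ∈ Finset.range d) :
      (r.choose i : K) = ∑ j ∈ Finset.range d, (p i).coeff j * (r : K) ^ j := by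
    rw [← hp_eval, Polynomial.eval_eq_sum_range']
    exact (hp_deg i).trans_lt (Finset.mem_range.1 hi)
  calc (A ^ r) x = ∑ i ∈ Finset.range d, (r.choose i : K) • ((A - 1) ^ i) x := by
        simp only [pow_eq_sum_choose_nsmul_of_sub_one_pow_eq_zero hd r, LinearMap.sum_apply,
          LinearMap.smul_apply, Nat.cast_smul_eq_nsmul]
    _ = ∑ i ∈ Finset.range d, ∑ j ∈ Finset.range d,
          (r : K) ^ j • (p i).coeff j • ((A - 1) ^ i) x := by
        refine Finset.sum_congr rfl fun i hi => ?_
        rw [h_choose i hi, Finset.sum_smul]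
        simp only [smul_smul, mul_comm]
    _ = _ := by rw [Finset.sum_comm]; simp only [Finset.smul_sum]

theorem eq_zero_of_eventually_sum_pow_smul_eq_zero {d : ℕ} {y : ℕ → V}
    (h : ∀ᶠ r : ℕ in Filter.atTop, ∑ j ∈ Finset.range d, (r : K) ^ j • y j = 0) :
    ∀ j < d, y j = 0 := by
  intro j hj
  rw [← Module.forall_dual_apply_eq_zero_iff K]
  intro φ
  let p : Polynomial K := ∑ i ∈ Finset.range d, Polynomial.C (φ (y i)) * Polynomial.X ^ i
  have h_root : ∀ᶠ r : ℕ in Filter.atTop, p.IsRoot (r : K) := by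
    filter_upwards [h] with r hr
    have h_eval := congrArg φ hr
    simp only [map_sum, map_smul, smul_eq_mul, map_zero] at h_eval
    simp only [p, Polynomial.IsRoot, Polynomial.eval_finsetSum, Polynomial.eval_C_mul,
      Polynomial.eval_pow, Polynomial.eval_X]
    simpa only [mul_comm] using h_eval
  have hp : p = 0 := by
    refine Polynomial.eq_zero_of_infinite_isRoot p ?_
    refine ((Nat.frequently_atTop_iff_infinite.1 h_root.frequently).image
      Nat.cast_injective.injOn).mono ?_
    rintro _ ⟨r, hr, rfl⟩
    exact hr
  simpa [p, Polynomial.finsetSum_coeff, Polynomial.coeff_C_mul_X_pow, hj] using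
    congrArg (Polynomial.coeff · j) hp

end UnipotentPowers

section Transvections

variable {n : ℕ} {i j : Fin n}

/-- The transvection `1 + a E_{ij}` as an element of `GL_n(ℂ)`: a root subgroup, for fixed
`i ≠ j`. -/
def transvectionGL (hij : i ≠ j) (a : ℂ) : GL (Fin n) ℂ :=
  Matrix.SpecialLinearGroup.toGL (Matrix.SpecialLinearGroup.transvection hij a)

theorem coe_transvectionGL (hij : i ≠ j) (a : ℂ) :
    (transvectionGL hij a : Matrix (Fin n) (Fin n) ℂ) = Matrix.transvection i j a := rfl

theorem transvection_apply_self {R : Type*} [CommRing R] (hij : i ≠ j) (a : R) (l : Fin n) :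
    Matrix.transvection i j a l l = 1 := by
  rw [Matrix.transvection, Matrix.add_apply, Matrix.one_apply_eq,
    Matrix.single_apply_of_ne (h := fun h => hij (h.1.trans h.2.symm)), add_zero]

theorem coe_diagGL (t : Fin n → ℂˣ) :
    (diagGL t : Matrix (Fin n) (Fin n) ℂ) = Matrix.diagonal fun i => (t i : ℂ) := rfl

theorem transvectionGL_pow (hij : i ≠ j) (a : ℂ) (r : ℕ) :
    transvectionGL hij a ^ r = transvectionGL hij (r * a) := by
  ext : 1
  induction r with
  | zero => simp [coe_transvectionGL]
  | succ r ih =>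
    rw [pow_succ, Units.val_mul, ih]
    simp only [coe_transvectionGL, Matrix.transvection_mul_transvection_same _ _ hij]
    push_cast
    ring_nf

theorem transvectionGL_zero (hij : i ≠ j) : transvectionGL hij 0 = 1 :=
  Units.ext (Matrix.transvection_zero i j)

theorem diagGL_mul_transvectionGL (hij : i ≠ j) (a : ℂ) (t : Fin n → ℂˣ) :
    diagGL t * transvectionGL hij a = transvectionGL hij (t i * (t j)⁻¹ * a) * diagGL t := by
  ext p q
  have htj : (t j : ℂ) ≠ 0 := (t j).ne_zero
  simp only [Units.val_mul, coe_diagGL, coe_transvectionGL, Matrix.diagonal_mul,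
    Matrix.mul_diagonal, Matrix.transvection, Matrix.add_apply, Matrix.one_apply,
    Matrix.single_apply]
  by_cases hpq : i = p ∧ j = q
  · obtain ⟨rfl, rfl⟩ := hpq
    simp only [hij, if_false, and_self, if_true, zero_add, mul_assoc, Units.val_inv_eq_inv_val]
    field_simp
  · rcases eq_or_ne p q with rfl | h
    · simp only [if_true, hpq, if_false, add_zero, mul_one, one_mul]
    · simp only [h, hpq, if_false, add_zero, mul_zero, zero_mul]

theorem transvectionGL_commute {k l : Fin n} (hij : i ≠ j) (hkl : k ≠ l) (hil : i ≠ l)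
    (hjk : j ≠ k) (a b : ℂ) : Commute (transvectionGL hij a) (transvectionGL hkl b) := by
  ext : 1
  simp only [Units.val_mul, coe_transvectionGL, Matrix.transvection, add_mul, mul_add, one_mul,
    mul_one, Matrix.single_mul_single_of_ne _ _ _ _ hjk,
    Matrix.single_mul_single_of_ne _ _ _ _ hil.symm]
  abel

theorem transvectionGL_eq_commutator {k : Fin n} (hij : i ≠ j) (hjk : j ≠ k) (hik : i ≠ k)
    (a : ℂ) : transvectionGL hik a = transvectionGL hij a * transvectionGL hjk 1 *
      transvectionGL hij (-a) * transvectionGL hjk (-1) := by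
  ext : 1
  simp only [Units.val_mul, coe_transvectionGL, Matrix.transvection, add_mul, mul_add, one_mul,
    mul_one, Matrix.single_mul_single_same, Matrix.single_mul_single_of_ne _ _ _ _ hij.symm,
    Matrix.single_mul_single_of_ne _ _ _ _ hjk.symm,
    Matrix.single_mul_single_of_ne _ _ _ _ hik.symm, ← Matrix.single_neg, mul_neg, neg_mul,
    add_zero]
  abel

/-- The factor `diag(…, c, …, c⁻¹, …)` is what makes the cyclic span of a highest weight vector
under lower transvections stable under upper ones. -/
theorem exists_transvectionGL_mul_swap (hij : i ≠ j) {a b : ℂ} (hab : 1 + a * b ≠ 0) :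
    ∃ (t : Fin n → ℂˣ) (a' b' : ℂ), transvectionGL hij a * transvectionGL hij.symm b =
      transvectionGL hij.symm b' * diagGL t * transvectionGL hij a' := by
  let c : ℂˣ := Units.mk0 (1 + a * b) hab
  refine ⟨Function.update (Function.update 1 i c) j c⁻¹, a / (1 + a * b), b / (1 + a * b), ?_⟩
  have h_diag : (diagGL (Function.update (Function.update 1 i c) j c⁻¹) : Matrix _ _ ℂ) =
      1 + Matrix.single i i (a * b) + Matrix.single j j ((1 + a * b)⁻¹ - 1) := by
    rw [coe_diagGL, ← Matrix.diagonal_one, ← Matrix.diagonal_single, ← Matrix.diagonal_single,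
      Matrix.diagonal_add, Matrix.diagonal_add]
    congr 1
    ext p
    rcases eq_or_ne p j with rfl | hpj
    · simp [c, hij.symm]
    · rcases eq_or_ne p i with rfl | hpi
      · simp [c, hpj]
      · simp [hpj, hpi]
  ext : 1
  simp only [Units.val_mul, h_diag, coe_transvectionGL, Matrix.transvection, add_mul, mul_add,
    one_mul, mul_one, Matrix.single_mul_single_same,
    Matrix.single_mul_single_of_ne _ _ _ _ hij, Matrix.single_mul_single_of_ne _ _ _ _ hij.symm]
  have hba : 1 + b * a ≠ 0 := mul_comm a b ▸ hab
  ext p q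
  simp only [zero_mul, add_zero, Matrix.add_apply, Matrix.single_apply]
  split_ifs <;> field_simp <;> ring

section Generation

variable {P : GL (Fin n) ℂ → Prop}

theorem forall_transvectionGL_of_adjacent (h_mul : ∀ g h, P g → P h → P (g * h))
    (h_adj : ∀ (i j : Fin n) (hij : i ≠ j), (i : ℕ) + 1 = j ∨ (j : ℕ) + 1 = i →
      ∀ a, P (transvectionGL hij a))
    (hij : i ≠ j) (a : ℂ) : P (transvectionGL hij a) := by
  obtain ⟨d, hd⟩ : ∃ d : ℕ, (i : ℕ) ≤ j + d ∧ (j : ℕ) ≤ i + d := ⟨i + j, by omega⟩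
  induction d generalizing i j a with
  | zero => exact absurd (Fin.ext (by omega)) hij
  | succ d ih =>
    have h_val : (i : ℕ) ≠ j := Fin.val_ne_of_ne hij
    by_cases h_near : (i : ℕ) + 1 = j ∨ (j : ℕ) + 1 = i
    · exact h_adj i j hij h_near a
    obtain ⟨k, hk⟩ : ∃ k : Fin n, ((i : ℕ) + 1 = k ∧ (k : ℕ) < j) ∨
        ((k : ℕ) + 1 = i ∧ (j : ℕ) < k) := by
      rcases lt_or_gt_of_ne h_val with h | h
      · exact ⟨⟨i + 1, by omega⟩, by simp only [true_and]; omega⟩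
      · exact ⟨⟨i - 1, by omega⟩, by simp only; omega⟩
    have hik : i ≠ k := Fin.ne_of_val_ne (by omega)
    have hkj : k ≠ j := Fin.ne_of_val_ne (by omega)
    have h_ik (b : ℂ) : P (transvectionGL hik b) := h_adj i k hik (by omega) b
    have h_kj (b : ℂ) : P (transvectionGL hkj b) := ih hkj b (by omega)
    rw [transvectionGL_eq_commutator hik hkj hij]
    exact h_mul _ _ (h_mul _ _ (h_mul _ _ (h_ik a) (h_kj 1)) (h_ik (-a))) (h_kj (-1))

theorem gl_induction_of_adjacent (h_mul : ∀ g h, P g → P h → P (g * h))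
    (h_diag : ∀ t, P (diagGL t))
    (h_adj : ∀ (i j : Fin n) (hij : i ≠ j), (i : ℕ) + 1 = j ∨ (j : ℕ) + 1 = i →
      ∀ a, P (transvectionGL hij a)) (g : GL (Fin n) ℂ) : P g := by
  suffices h : ∃ g' : GL (Fin n) ℂ, (g' : Matrix (Fin n) (Fin n) ℂ) = g ∧ P g' by
    obtain ⟨g', h_eq, hg'⟩ := h
    exact Units.ext h_eq ▸ hg'
  refine Matrix.diagonal_transvection_induction_of_det_ne_zero
    (fun M => ∃ g' : GL (Fin n) ℂ, (g' : Matrix (Fin n) (Fin n) ℂ) = M ∧ P g') g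
    (Matrix.GeneralLinearGroup.det_ne_zero g) (fun D hD => ?_) (fun T => ?_) ?_
  · rw [Matrix.det_diagonal, Finset.prod_ne_zero_iff] at hD
    exact ⟨diagGL fun i => Units.mk0 (D i) (hD i (Finset.mem_univ i)), rfl, h_diag _⟩
  · exact ⟨transvectionGL T.hij T.c, rfl, forall_transvectionGL_of_adjacent h_mul h_adj T.hij T.c⟩
  · rintro _ _ - - ⟨g, rfl, hg⟩ ⟨h, rfl, hh⟩
    exact ⟨g * h, rfl, h_mul g h hg hh⟩

end Generation

end Transvections

section Cyclic

variable {K G V : Type*} [Field K] [Monoid G] [AddCommGroup V] [Module K V]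

/-- The cyclic subrepresentation generated by `v`. -/
def cyclicSubrep (ρ : Representation K G V) (v : V) : Subrepresentation ρ where
  toSubmodule := Submodule.span K (Set.range fun g => ρ g v)
  apply_mem_toSubmodule g x hx := by
    induction hx using Submodule.span_induction with
    | mem x hx =>
      obtain ⟨h, rfl⟩ := hx
      exact Submodule.subset_span ⟨g * h, by simp only [map_mul, Module.End.mul_apply]⟩
    | zero => rw [map_zero]; exact zero_mem _
    | add x y _ _ hx hy => rw [map_add]; exact add_mem hx hy
    | smul a x _ hx => rw [map_smul]; exact Submodule.smul_mem _ a hx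

variable {ρ : Representation K G V} {v : V}

theorem self_mem_cyclicSubrep : v ∈ cyclicSubrep ρ v :=
  Submodule.subset_span ⟨1, by simp only [map_one, Module.End.one_apply]⟩

theorem cyclicSubrep_le_iff {S : Subrepresentation ρ} : cyclicSubrep ρ v ≤ S ↔ v ∈ S := by
  refine ⟨fun h => h self_mem_cyclicSubrep, fun h => ?_⟩
  change (cyclicSubrep ρ v).toSubmodule ≤ S.toSubmodule
  exact Submodule.span_le.2 (Set.range_subset_iff.2 fun g => S.apply_mem_toSubmodule g h)

end Cyclic

section HighestWeight

variable {n : ℕ} {V : Type*} [AddCommGroup V] [Module ℂ V]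
  {ρ : Representation ℂ (GL (Fin n) ℂ) V} {ω : Fin n → ℤ} {v : V}

/-- `v` lies in the `ω`-weight space of the diagonal torus. -/
def IsWeightVector (ρ : Representation ℂ (GL (Fin n) ℂ) V) (ω : Fin n → ℤ) (v : V) : Prop :=
  ∀ t : Fin n → ℂˣ, ρ (diagGL t) v = (∏ i, (t i : ℂ) ^ ω i) • v

/-- `v` is a weight vector of weight `ω` fixed by the upper unitriangular group. Fixedness is
only required under transvections, which generate that group; the vector `0` is allowed. -/
structure IsHighestWeightVector (ρ : Representation ℂ (GL (Fin n) ℂ) V) (ω : Fin n → ℤ)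
    (v : V) : Prop where
  isWeightVector : IsWeightVector ρ ω v
  apply_transvectionGL : ∀ (i j : Fin n) (hij : i < j) (a : ℂ), ρ (transvectionGL hij.ne a) v = v

section Unipotent

variable [FiniteDimensional ℂ V]

theorem isNilpotent_apply_transvectionGL_sub_one (ρ : Representation ℂ (GL (Fin n) ℂ) V)
    {i j : Fin n} (hij : i ≠ j) (a : ℂ) : IsNilpotent (ρ (transvectionGL hij a) - 1) := by
  refine isNilpotent_sub_one_of_forall_isConj_pow ((Group.isUnit _).map ρ) fun N hN => ?_
  rw [← map_pow]
  let t : Fin n → ℂˣ := Function.update 1 i (Units.mk0 (N : ℂ) (Nat.cast_ne_zero.2 hN.ne'))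
  refine ρ.map_isConj (isConj_iff.2 ⟨diagGL t, ?_⟩)
  rw [diagGL_mul_transvectionGL, mul_inv_cancel_right, transvectionGL_pow]
  simp [t, hij.symm]

theorem exists_forall_apply_transvectionGL_eq_sum (ρ : Representation ℂ (GL (Fin n) ℂ) V)
    {i j : Fin n} (hij : i ≠ j) (a : ℂ) (x : V) :
    ∃ (d : ℕ) (y : ℕ → V), ∀ r : ℕ,
      ρ (transvectionGL hij (r * a)) x = ∑ l ∈ Finset.range d, (r : ℂ) ^ l • y l := by
  simp only [← transvectionGL_pow, map_pow]
  exact exists_forall_pow_apply_eq_sum (isNilpotent_apply_transvectionGL_sub_one ρ hij a) x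

theorem apply_transvectionGL_mem_of_eventually_mem {i j : Fin n} (hij : i ≠ j) {a : ℂ} {x : V}
    {M : Submodule ℂ V}
    (h : ∀ᶠ r : ℕ in Filter.atTop, ρ (transvectionGL hij (r * a)) x ∈ M) :
    ρ (transvectionGL hij a) x ∈ M := by
  obtain ⟨d, y, hy⟩ := exists_forall_apply_transvectionGL_eq_sum ρ hij a x
  have h_coeff : ∀ l < d, M.mkQ (y l) = 0 := by
    refine eq_zero_of_eventually_sum_pow_smul_eq_zero (K := ℂ) ?_
    filter_upwards [h] with r hr
    rw [hy, ← Submodule.ker_mkQ M, LinearMap.mem_ker] at hr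
    simpa only [map_sum, map_smul] using hr
  have h_one := hy 1
  rw [Nat.cast_one, one_mul] at h_one
  rw [h_one, ← Submodule.ker_mkQ M, LinearMap.mem_ker, map_sum]
  refine Finset.sum_eq_zero fun l hl => ?_
  rw [map_smul, h_coeff l (Finset.mem_range.1 hl), smul_zero]

end Unipotent

section LowerSpan

variable (n) in
/-- The monoid generated by the adjacent lower transvections `1 + a E_{i+1,i}`. -/
def lowerMonoid : Submonoid (GL (Fin n) ℂ) :=
  Submonoid.closure
    {g | ∃ (i j : Fin n) (h : j ≠ i) (a : ℂ), (i : ℕ) + 1 = j ∧ g = transvectionGL h a}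

/-- The span of the translates of `v` by `lowerMonoid`. For a highest weight vector it is stable
under all of `GL_n(ℂ)`: this is the triangular decomposition of the cyclic span. -/
def lowerSpan (ρ : Representation ℂ (GL (Fin n) ℂ) V) (v : V) : Submodule ℂ V :=
  Submodule.span ℂ ((fun g => ρ g v) '' lowerMonoid n)

theorem self_mem_lowerSpan : v ∈ lowerSpan ρ v :=
  Submodule.subset_span ⟨1, one_mem _, by simp only [map_one, Module.End.one_apply]⟩

theorem apply_mem_lowerSpan_of_forall {g : GL (Fin n) ℂ}
    (hg : ∀ L ∈ lowerMonoid n, ρ g (ρ L v) ∈ lowerSpan ρ v) {x : V} (hx : x ∈ lowerSpan ρ v) :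
    ρ g x ∈ lowerSpan ρ v := by
  suffices h : lowerSpan ρ v ≤ (lowerSpan ρ v).comap (ρ g) from h hx
  rintro x hx
  refine (Submodule.span_le.2 ?_ : lowerSpan ρ v ≤ _) hx
  rintro _ ⟨L, hL, rfl⟩
  exact hg L hL

theorem apply_mem_lowerSpan_of_mem_lowerMonoid {g : GL (Fin n) ℂ} (hg : g ∈ lowerMonoid n) {x : V}
    (hx : x ∈ lowerSpan ρ v) : ρ g x ∈ lowerSpan ρ v :=
  apply_mem_lowerSpan_of_forall (fun L hL => Submodule.subset_span
    ⟨g * L, mul_mem hg hL, by simp only [map_mul, Module.End.mul_apply]⟩) hx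

theorem exists_mem_lowerMonoid_diagGL_mul (t : Fin n → ℂˣ) {L : GL (Fin n) ℂ}
    (hL : L ∈ lowerMonoid n) : ∃ L' ∈ lowerMonoid n, diagGL t * L = L' * diagGL t := by
  induction hL using Submonoid.closure_induction with
  | mem g hg =>
    obtain ⟨i, j, h, a, hij, rfl⟩ := hg
    exact ⟨_, Submonoid.subset_closure ⟨i, j, h, _, hij, rfl⟩, diagGL_mul_transvectionGL h a t⟩
  | one => exact ⟨1, one_mem _, by rw [mul_one, one_mul]⟩
  | mul g h _ _ hg hh =>
    obtain ⟨g', hg', hg_eq⟩ := hg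
    obtain ⟨h', hh', hh_eq⟩ := hh
    exact ⟨g' * h', mul_mem hg' hh', by rw [← mul_assoc, hg_eq, mul_assoc, hh_eq, mul_assoc]⟩

theorem IsWeightVector.diagGL_apply_mem_lowerSpan (hv : IsWeightVector ρ ω v) (t : Fin n → ℂˣ)
    {x : V} (hx : x ∈ lowerSpan ρ v) : ρ (diagGL t) x ∈ lowerSpan ρ v := by
  refine apply_mem_lowerSpan_of_forall (fun L hL => ?_) hx
  obtain ⟨L', hL', h_eq⟩ := exists_mem_lowerMonoid_diagGL_mul t hL
  rw [← Module.End.mul_apply, ← map_mul, h_eq, map_mul, Module.End.mul_apply, hv t, map_smul]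
  exact Submodule.smul_mem _ _ (Submodule.subset_span ⟨L', hL', rfl⟩)

variable [FiniteDimensional ℂ V]

-- The factorization of `x_{ij}(a) x_{ji}(b)` excludes `1 + a b = 0`; that case follows from the
-- others because `x_{ij}(a)` acts polynomially in `a`.
theorem IsWeightVector.transvectionGL_apply_mem_lowerSpan_swap (hv : IsWeightVector ρ ω v)
    {i j : Fin n} (hij : i ≠ j) (h_adj : (i : ℕ) + 1 = j) {z : V}
    (hz : ∀ a, ρ (transvectionGL hij a) z ∈ lowerSpan ρ v) (a b : ℂ) :
    ρ (transvectionGL hij a) (ρ (transvectionGL hij.symm b) z) ∈ lowerSpan ρ v := by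
  have h_generic (a : ℂ) (hab : 1 + a * b ≠ 0) :
      ρ (transvectionGL hij a) (ρ (transvectionGL hij.symm b) z) ∈ lowerSpan ρ v := by
    obtain ⟨t, a', b', h_eq⟩ := exists_transvectionGL_mul_swap hij hab
    simp only [← Module.End.mul_apply, ← map_mul, h_eq]
    simp only [map_mul, Module.End.mul_apply]
    exact apply_mem_lowerSpan_of_mem_lowerMonoid
      (Submonoid.subset_closure ⟨i, j, hij.symm, b', h_adj, rfl⟩)
      (hv.diagGL_apply_mem_lowerSpan t (hz a'))
  by_cases hab : 1 + a * b = 0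
  · refine apply_transvectionGL_mem_of_eventually_mem hij ?_
    filter_upwards [Filter.eventually_gt_atTop 1] with r hr
    refine h_generic _ fun h => ?_
    have h_one : (r : ℂ) = 1 := by linear_combination (r : ℂ) * hab - h
    exact hr.ne' (Nat.cast_eq_one.1 h_one)
  · exact h_generic a hab

theorem IsHighestWeightVector.transvectionGL_apply_mem_lowerSpan (hv : IsHighestWeightVector ρ ω v)
    {i j : Fin n} (hij : i ≠ j) (h_adj : (i : ℕ) + 1 = j) (a : ℂ) {x : V}
    (hx : x ∈ lowerSpan ρ v) : ρ (transvectionGL hij a) x ∈ lowerSpan ρ v := by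
  refine apply_mem_lowerSpan_of_forall (fun L hL => ?_) hx
  induction hL using Submonoid.closure_induction_left generalizing a with
  | one =>
    rw [map_one, Module.End.one_apply, hv.apply_transvectionGL i j (Fin.lt_def.2 (by omega))]
    exact self_mem_lowerSpan
  | mul_left g hg L _ ih =>
    obtain ⟨k, l, hlk, b, h_adj', rfl⟩ := hg
    rw [map_mul, Module.End.mul_apply]
    by_cases hik : i = k
    · obtain rfl := hik
      obtain rfl : j = l := Fin.ext (by omega)
      exact hv.isWeightVector.transvectionGL_apply_mem_lowerSpan_swap hij h_adj ih a b
    · have hjl : j ≠ l := fun h => hik (Fin.ext (by omega))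
      rw [← Module.End.mul_apply, ← map_mul,
        (transvectionGL_commute hij hlk hik hjl a b).eq, map_mul, Module.End.mul_apply]
      exact apply_mem_lowerSpan_of_mem_lowerMonoid
        (Submonoid.subset_closure ⟨k, l, hlk, b, h_adj', rfl⟩) (ih a)

theorem IsHighestWeightVector.cyclicSubrep_le_lowerSpan (hv : IsHighestWeightVector ρ ω v) :
    (cyclicSubrep ρ v).toSubmodule ≤ lowerSpan ρ v := by
  let M : Subrepresentation ρ :=
    { toSubmodule := lowerSpan ρ v
      apply_mem_toSubmodule := fun g => by
        induction g using gl_induction_of_adjacent with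
        | h_mul g h hg hh =>
          intro x hx
          rw [map_mul, Module.End.mul_apply]
          exact hg (hh hx)
        | h_diag t => exact fun x hx => hv.isWeightVector.diagGL_apply_mem_lowerSpan t hx
        | h_adj i j hij h a =>
          intro x hx
          rcases h with h | h
          · exact hv.transvectionGL_apply_mem_lowerSpan hij h a hx
          · exact apply_mem_lowerSpan_of_mem_lowerMonoid
              (Submonoid.subset_closure ⟨j, i, hij, a, h, rfl⟩) hx }
  exact cyclicSubrep_le_iff (S := M).2 self_mem_lowerSpan

end LowerSpan

section Grading

/-- The element `(1, 2, 4, …)` of the torus; `1 + a E_{i+1,i}` raises its eigenvalues on a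
representation by powers of `2`. -/
noncomputable def twoPowTorus (n : ℕ) : Fin n → ℂˣ := fun i => Units.mk0 2 two_ne_zero ^ (i : ℕ)

/-- The `c`-eigenspace of `twoPowTorus`. -/
noncomputable abbrev twoPowEigenspace (ρ : Representation ℂ (GL (Fin n) ℂ) V) (c : ℂ) :
    Submodule ℂ V :=
  Module.End.eigenspace (ρ (diagGL (twoPowTorus n))) c

/-- The sum of the eigenspaces of `twoPowTorus` for the eigenvalues `2c, 4c, 8c, …`. -/
noncomputable def higherEigenspaces (ρ : Representation ℂ (GL (Fin n) ℂ) V) (c : ℂ) :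
    Submodule ℂ V :=
  ⨆ q : ℕ, twoPowEigenspace ρ (c * 2 ^ (q + 1))

theorem higherEigenspaces_mul_two_pow_le (ρ : Representation ℂ (GL (Fin n) ℂ) V) (c : ℂ) (q : ℕ) :
    higherEigenspaces ρ (c * 2 ^ q) ≤ higherEigenspaces ρ c := by
  refine iSup_le fun q' => ?_
  rw [show c * 2 ^ q * 2 ^ (q' + 1) = c * 2 ^ (q + q' + 1) by ring]
  exact le_iSup (fun q => twoPowEigenspace ρ (c * 2 ^ (q + 1))) (q + q')

theorem disjoint_eigenspace_higherEigenspaces (ρ : Representation ℂ (GL (Fin n) ℂ) V) {c : ℂ}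
    (hc : c ≠ 0) : Disjoint (twoPowEigenspace ρ c) (higherEigenspaces ρ c) := by
  refine (Module.End.eigenspaces_iSupIndep _ c).mono_right ?_
  refine iSup_le fun q => le_iSup₂_of_le (c * 2 ^ (q + 1)) (fun h => ?_) le_rfl
  have h_pow : (2 : ℂ) ^ (q + 1) = 1 := mul_left_cancel₀ hc (h.trans (mul_one c).symm)
  exact (Nat.one_lt_two_pow q.succ_ne_zero).ne' (by exact_mod_cast h_pow)

theorem apply_mem_higherEigenspaces_of_forall {g : GL (Fin n) ℂ}
    (hg : ∀ c, ∀ x ∈ twoPowEigenspace ρ c, ρ g x - x ∈ higherEigenspaces ρ c) {c : ℂ} {x : V}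
    (hx : x ∈ higherEigenspaces ρ c) :
    ρ g x ∈ higherEigenspaces ρ c := by
  suffices h : higherEigenspaces ρ c ≤ (higherEigenspaces ρ c).comap (ρ g) from h hx
  refine iSup_le fun q x hx => ?_
  have h_sub := higherEigenspaces_mul_two_pow_le ρ c (q + 1) (hg _ x hx)
  simpa only [Submodule.mem_comap, sub_add_cancel] using
    add_mem h_sub (Submodule.mem_iSup_of_mem q hx : x ∈ higherEigenspaces ρ c)

variable [FiniteDimensional ℂ V]

-- Comparing coefficients of `r ^ l` in `τ x_{ij}(r a) x = c x_{ij}(2 r a) x`, where `τ` is the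
-- element `twoPowTorus`, shows that the `l`-th coefficient is a `2 ^ l c`-eigenvector.
theorem apply_transvectionGL_sub_mem_higherEigenspaces {i j : Fin n} (hij : i ≠ j)
    (h_adj : (j : ℕ) + 1 = i) (a : ℂ) {c : ℂ} {x : V} (hx : x ∈ twoPowEigenspace ρ c) :
    ρ (transvectionGL hij a) x - x ∈ higherEigenspaces ρ c := by
  rw [Module.End.mem_eigenspace_iff] at hx
  obtain ⟨d, y, hy⟩ := exists_forall_apply_transvectionGL_eq_sum ρ hij a x
  have h_torus (r : ℕ) : ρ (diagGL (twoPowTorus n)) (ρ (transvectionGL hij (r * a)) x) =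
      c • ρ (transvectionGL hij ((2 * r : ℕ) * a)) x := by
    have h_ratio : (twoPowTorus n i : ℂ) * ((twoPowTorus n j)⁻¹ : ℂˣ) = 2 := by
      rw [twoPowTorus, twoPowTorus, ← h_adj, ← Units.val_mul, pow_succ', mul_inv_cancel_right,
        Units.val_mk0]
    rw [← Module.End.mul_apply, ← map_mul, diagGL_mul_transvectionGL, h_ratio, map_mul,
      Module.End.mul_apply, hx, map_smul, Nat.cast_mul, Nat.cast_ofNat, mul_assoc]
  have h_coeff : ∀ l < d, ρ (diagGL (twoPowTorus n)) (y l) - (c * 2 ^ l) • y l = 0 := by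
    refine eq_zero_of_eventually_sum_pow_smul_eq_zero (K := ℂ) (.of_forall fun r => ?_)
    have h_eq := h_torus r
    rw [hy, hy, map_sum, Finset.smul_sum, ← sub_eq_zero, ← Finset.sum_sub_distrib] at h_eq
    rw [← h_eq]
    refine Finset.sum_congr rfl fun l _ => ?_
    rw [smul_sub, map_smul, smul_smul, smul_smul, Nat.cast_mul, mul_pow, Nat.cast_ofNat]
    ring_nf
  have h_sub : ρ (transvectionGL hij a) x - x =
      ∑ l ∈ Finset.range d, ((1 : ℂ) ^ l - 0 ^ l) • y l := by
    have h_x : x = ∑ l ∈ Finset.range d, (0 : ℂ) ^ l • y l := by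
      simpa only [Nat.cast_zero, zero_mul, transvectionGL_zero, map_one,
        Module.End.one_apply] using hy 0
    have h_gx : ρ (transvectionGL hij a) x = ∑ l ∈ Finset.range d, (1 : ℂ) ^ l • y l := by
      simpa only [Nat.cast_one, one_mul] using hy 1
    simp only [sub_smul, Finset.sum_sub_distrib, ← h_gx, ← h_x]
  rw [h_sub]
  refine sum_mem fun l hl => ?_
  rcases l with - | l
  · simp only [pow_zero, sub_self, zero_smul, zero_mem]
  · refine Submodule.smul_mem _ _ (Submodule.mem_iSup_of_mem l ?_)
    exact Module.End.mem_eigenspace_iff.2 (sub_eq_zero.1 (h_coeff _ (Finset.mem_range.1 hl)))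

theorem apply_sub_mem_higherEigenspaces {L : GL (Fin n) ℂ} (hL : L ∈ lowerMonoid n) :
    ∀ c, ∀ x ∈ twoPowEigenspace ρ c, ρ L x - x ∈ higherEigenspaces ρ c := by
  induction hL using Submonoid.closure_induction with
  | mem g hg =>
    obtain ⟨i, j, h, a, h_adj, rfl⟩ := hg
    exact fun c x hx => apply_transvectionGL_sub_mem_higherEigenspaces h h_adj a hx
  | one =>
    intro c x _
    rw [map_one, Module.End.one_apply, sub_self]
    exact zero_mem _
  | mul g h _ _ hg hh =>
    intro c x hx
    rw [map_mul, Module.End.mul_apply, ← sub_add_sub_cancel _ (ρ g x), ← map_sub]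
    exact add_mem (apply_mem_higherEigenspaces_of_forall hg (hh c x hx)) (hg c x hx)

theorem IsHighestWeightVector.exists_smul_eq_of_mem_cyclicSubrep
    (hv : IsHighestWeightVector ρ ω v) {x : V} (hx : IsWeightVector ρ ω x)
    (h_mem : x ∈ cyclicSubrep ρ v) : ∃ a : ℂ, a • v = x := by
  let c : ℂ := ∏ i, (twoPowTorus n i : ℂ) ^ ω i
  have hc : c ≠ 0 := Finset.prod_ne_zero_iff.2 fun i _ => zpow_ne_zero _ (twoPowTorus n i).ne_zero
  have hv_eig : v ∈ twoPowEigenspace ρ c :=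
    Module.End.mem_eigenspace_iff.2 (hv.isWeightVector _)
  have hx_eig : x ∈ twoPowEigenspace ρ c := Module.End.mem_eigenspace_iff.2 (hx _)
  have h_le : lowerSpan ρ v ≤ Submodule.span ℂ {v} ⊔ higherEigenspaces ρ c := by
    refine Submodule.span_le.2 ?_
    rintro _ ⟨L, hL, rfl⟩
    exact Submodule.mem_sup.2 ⟨v, Submodule.mem_span_singleton_self v, _,
      apply_sub_mem_higherEigenspaces hL c v hv_eig, add_sub_cancel _ _⟩
  obtain ⟨_, hu, s, hs, rfl⟩ := Submodule.mem_sup.1 (h_le (hv.cyclicSubrep_le_lowerSpan h_mem))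
  obtain ⟨a, rfl⟩ := Submodule.mem_span_singleton.1 hu
  have hs_eig : s ∈ twoPowEigenspace ρ c := by
    simpa only [add_sub_cancel_left] using sub_mem hx_eig (Submodule.smul_mem _ a hv_eig)
  have hs_zero : s = 0 :=
    Submodule.disjoint_def.1 (disjoint_eigenspace_higherEigenspaces ρ hc) s hs_eig hs
  exact ⟨a, by rw [hs_zero, add_zero]⟩

end Grading

end HighestWeight

section Intertwining

variable {K G V W : Type*} [Field K] [Monoid G] [AddCommGroup V] [Module K V] [AddCommGroup W]
  [Module K W] {ρ : Representation K G V} {σ : Representation K G W}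

/-- The image of a subrepresentation under an intertwining map. -/
def mapSubrep (f : ρ.IntertwiningMap σ) (S : Subrepresentation ρ) : Subrepresentation σ where
  toSubmodule := S.toSubmodule.map f.toLinearMap
  apply_mem_toSubmodule := by
    rintro g _ ⟨x, hx, rfl⟩
    exact ⟨ρ g x, S.apply_mem_toSubmodule g hx, f.isIntertwining ρ σ g x⟩

/-- The preimage of a subrepresentation under an intertwining map. -/
def comapSubrep (f : ρ.IntertwiningMap σ) (S : Subrepresentation σ) : Subrepresentation ρ where
  toSubmodule := S.toSubmodule.comap f.toLinearMap
  apply_mem_toSubmodule g x hx := by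
    change f (ρ g x) ∈ S
    rw [f.isIntertwining]
    exact S.apply_mem_toSubmodule g hx

theorem exists_intertwiningMap_eq_graph {C : Subrepresentation (ρ.prod σ)}
    (hC : Function.Bijective (Prod.fst ∘ C.toSubmodule.subtype)) :
    ∃ f : ρ.IntertwiningMap σ, ∀ p : V × W, p ∈ C ↔ p.2 = f p.1 := by
  obtain ⟨f, hf⟩ := Submodule.exists_eq_graph hC
  have h_mem (p : V × W) : p ∈ C ↔ p.2 = f p.1 := by
    rw [← LinearMap.mem_graph_iff, ← hf]
    rfl
  refine ⟨⟨f, fun g => LinearMap.ext fun x => ?_⟩, h_mem⟩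
  exact ((h_mem _).1 (C.apply_mem_toSubmodule g ((h_mem (x, f x)).2 rfl))).symm

theorem isIrreducible_of_forall_submodule [Nontrivial V]
    (h : ∀ S : Submodule K V, (∀ g, ∀ x ∈ S, ρ g x ∈ S) → S = ⊥ ∨ S = ⊤) : ρ.IsIrreducible := by
  have : Nontrivial (Subrepresentation ρ) :=
    ⟨⊥, ⊤, fun h_eq => bot_ne_top (congrArg Subrepresentation.toSubmodule h_eq)⟩
  exact ⟨fun S => (h S.toSubmodule S.apply_mem_toSubmodule).imp
    (fun hS => Subrepresentation.toSubmodule_injective hS)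
    (fun hS => Subrepresentation.toSubmodule_injective hS)⟩

variable [ρ.IsIrreducible] {v : V}

theorem cyclicSubrep_eq_top (hv : v ≠ 0) : cyclicSubrep ρ v = ⊤ :=
  (eq_bot_or_eq_top _).resolve_left fun h =>
    hv ((Submodule.mem_bot K).1 (h ▸ self_mem_cyclicSubrep : v ∈ (⊥ : Subrepresentation ρ)))

theorem intertwiningMap_eq_of_apply_eq {f f' : ρ.IntertwiningMap σ} (hv : v ≠ 0)
    (h : f v = f' v) : f = f' := by
  refine sub_eq_zero.1 ((Representation.IsIrreducible.injective_or_eq_zero _).resolve_left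
    fun h_inj => hv (h_inj ?_))
  rw [map_zero, Representation.IntertwiningMap.coe_sub, Pi.sub_apply, h, sub_self]

end Intertwining

section HighestWeightSemisimple

variable {n : ℕ} {V W : Type*} [AddCommGroup V] [Module ℂ V] [AddCommGroup W]
  [Module ℂ W] {ρ : Representation ℂ (GL (Fin n) ℂ) V}
  {σ : Representation ℂ (GL (Fin n) ℂ) W} {ω : Fin n → ℤ} {v : V} {w : W}

theorem IsWeightVector.exists_add_eq_of_isCompl (hv : IsWeightVector ρ ω v)
    {S T : Subrepresentation ρ} (hST : IsCompl S T) :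
    ∃ a ∈ S, ∃ b ∈ T, a + b = v ∧ IsWeightVector ρ ω a := by
  have hv_mem : v ∈ S.toSubmodule ⊔ T.toSubmodule := by
    rw [← Subrepresentation.toSubmodule_sup, hST.sup_eq_top]
    exact Submodule.mem_top
  obtain ⟨a, ha, b, hb, rfl⟩ := Submodule.mem_sup.1 hv_mem
  refine ⟨a, ha, b, hb, rfl, fun t => ?_⟩
  set χ := ∏ i, (t i : ℂ) ^ ω i
  have h_diff : ρ (diagGL t) a - χ • a = χ • b - ρ (diagGL t) b := by
    have h_eq := hv t
    rw [map_add, smul_add] at h_eq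
    rw [sub_eq_sub_iff_add_eq_add, h_eq, add_comm]
  have h_mem : ρ (diagGL t) a - χ • a ∈ S ⊓ T :=
    ⟨sub_mem (S.apply_mem_toSubmodule _ ha) (S.toSubmodule.smul_mem χ ha), h_diff ▸
      sub_mem (T.toSubmodule.smul_mem χ hb) (T.apply_mem_toSubmodule _ hb)⟩
  rw [hST.inf_eq_bot] at h_mem
  exact sub_eq_zero.1 ((Submodule.mem_bot ℂ).1 h_mem)

theorem IsHighestWeightVector.prodMk (hw : IsHighestWeightVector σ ω w)
    (hv : IsHighestWeightVector ρ ω v) : IsHighestWeightVector (σ.prod ρ) ω (w, v) where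
  isWeightVector t := Prod.ext (hw.isWeightVector t) (hv.isWeightVector t)
  apply_transvectionGL i j hij a :=
    Prod.ext (hw.apply_transvectionGL i j hij a) (hv.apply_transvectionGL i j hij a)

variable [FiniteDimensional ℂ V]

theorem IsHighestWeightVector.isAtom_cyclicSubrep [ρ.IsSemisimpleRepresentation]
    (hv : IsHighestWeightVector ρ ω v) (hv_ne : v ≠ 0) : IsAtom (cyclicSubrep ρ v) := by
  refine ⟨fun h => hv_ne ((Submodule.mem_bot ℂ).1 (h ▸ self_mem_cyclicSubrep :
    v ∈ (⊥ : Subrepresentation ρ))), fun S hS => ?_⟩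
  obtain ⟨T, hST⟩ := exists_isCompl S
  obtain ⟨a, ha, b, hb, h_add, ha_weight⟩ := hv.isWeightVector.exists_add_eq_of_isCompl hST
  obtain ⟨c, rfl⟩ := hv.exists_smul_eq_of_mem_cyclicSubrep ha_weight (hS.le ha)
  rcases eq_or_ne c 0 with rfl | hc
  · rw [zero_smul, zero_add] at h_add
    have hS_le : S ≤ T := hS.le.trans (cyclicSubrep_le_iff.2 (h_add ▸ hb))
    exact hST.disjoint.eq_bot_of_le hS_le
  · have hvS : v ∈ S := (S.toSubmodule.smul_mem_iff hc).1 ha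
    exact absurd (cyclicSubrep_le_iff.2 hvS) hS.not_ge

variable [FiniteDimensional ℂ W]

-- If the cyclic subrepresentation generated by `(w, v)` met `0 × V` nontrivially, it would
-- contain all of `0 × cyclicSubrep ρ v`, hence `(0, v)`, which has the weight of `(w, v)`.
theorem IsHighestWeightVector.eq_zero_of_zero_prod_mem_cyclicSubrep
    (hw : IsHighestWeightVector σ ω w) (hw_ne : w ≠ 0) (hv : IsHighestWeightVector ρ ω v)
    (hv_atom : IsAtom (cyclicSubrep ρ v)) {y : V} (hy : (0, y) ∈ cyclicSubrep (σ.prod ρ) (w, v)) :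
    y = 0 := by
  set C := cyclicSubrep (σ.prod ρ) (w, v)
  let D := comapSubrep (.inr ℂ σ ρ) C
  have hC_le : C ≤ comapSubrep (.snd ℂ σ ρ) (cyclicSubrep ρ v) :=
    cyclicSubrep_le_iff.2 (self_mem_cyclicSubrep (ρ := ρ))
  have hD_le : D ≤ cyclicSubrep ρ v := fun z hz => hC_le hz
  have hD : D = ⊥ := by
    refine (hv_atom.le_iff.1 hD_le).resolve_right fun h => ?_
    have hv_mem : (0, v) ∈ C := (h.ge self_mem_cyclicSubrep : v ∈ D)
    have hv_weight : IsWeightVector (σ.prod ρ) ω (0, v) := fun t =>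
      Prod.ext ((map_zero (σ _)).trans (smul_zero _).symm) (hv.isWeightVector t)
    obtain ⟨a, ha⟩ := (hw.prodMk hv).exists_smul_eq_of_mem_cyclicSubrep hv_weight hv_mem
    obtain ⟨haw, hav⟩ := Prod.ext_iff.1 ha
    obtain rfl : a = 0 := (smul_eq_zero.1 haw).resolve_right hw_ne
    refine hv_atom.1 (eq_bot_iff.2 (cyclicSubrep_le_iff.2 ?_))
    exact (Submodule.mem_bot ℂ).2 (hav.symm.trans (zero_smul ℂ v))
  exact (Submodule.mem_bot ℂ).1 (hD.le hy)

theorem IsHighestWeightVector.exists_intertwiningMap_apply_eq [σ.IsIrreducible]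
    (hw : IsHighestWeightVector σ ω w) (hw_ne : w ≠ 0) (hv : IsHighestWeightVector ρ ω v)
    (hv_atom : IsAtom (cyclicSubrep ρ v)) : ∃ f : σ.IntertwiningMap ρ, f w = v := by
  let C := cyclicSubrep (σ.prod ρ) (w, v)
  have h_surj (x : W) : ∃ y, (x, y) ∈ C := by
    have h_top : cyclicSubrep σ w ≤ mapSubrep (.fst ℂ σ ρ) C :=
      cyclicSubrep_le_iff.2 ⟨(w, v), self_mem_cyclicSubrep, rfl⟩
    rw [cyclicSubrep_eq_top hw_ne] at h_top
    obtain ⟨⟨_, y⟩, hy, rfl⟩ := h_top (Submodule.mem_top : x ∈ (⊤ : Submodule ℂ W))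
    exact ⟨y, hy⟩
  have h_inj {x : W} {y y' : V} (hy : (x, y) ∈ C) (hy' : (x, y') ∈ C) : y = y' := by
    have h_diff : (x, y) - (x, y') ∈ C := C.toSubmodule.sub_mem hy hy'
    rw [Prod.mk_sub_mk, sub_self] at h_diff
    exact sub_eq_zero.1 (hw.eq_zero_of_zero_prod_mem_cyclicSubrep hw_ne hv hv_atom h_diff)
  obtain ⟨f, hf⟩ : ∃ f : σ.IntertwiningMap ρ, ∀ p : W × V, p ∈ C ↔ p.2 = f p.1 := by
    refine exists_intertwiningMap_eq_graph ⟨?_, fun x => ?_⟩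
    · rintro ⟨⟨x, y⟩, hy⟩ ⟨⟨_, y'⟩, hy'⟩ rfl
      exact Subtype.ext (Prod.ext rfl (h_inj hy hy'))
    · obtain ⟨y, hy⟩ := h_surj x
      exact ⟨⟨(x, y), hy⟩, rfl⟩
  exact ⟨f, ((hf (w, v)).1 self_mem_cyclicSubrep).symm⟩

end HighestWeightSemisimple

section Semisimplicity

theorem isSemisimpleRepresentation_of_injective {K G V W : Type*} [Field K] [Monoid G]
    [AddCommGroup V] [Module K V] [AddCommGroup W] [Module K W] {ρ : Representation K G V}
    {σ : Representation K G W} [σ.IsSemisimpleRepresentation] (f : ρ.IntertwiningMap σ)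
    (hf : Function.Injective f) : ρ.IsSemisimpleRepresentation := by
  refine ⟨fun S => ?_⟩
  obtain ⟨T, hT⟩ := exists_isCompl (mapSubrep f S)
  refine ⟨comapSubrep f T, disjoint_iff.2 (eq_bot_iff.2 fun x ⟨hxS, hxT⟩ => ?_),
    codisjoint_iff.2 (eq_top_iff.2 fun x _ => ?_)⟩
  · have h_mem : f x ∈ mapSubrep f S ⊓ T := ⟨⟨x, hxS, rfl⟩, hxT⟩
    rw [hT.inf_eq_bot] at h_mem
    exact (Submodule.mem_bot K).2 (hf (((Submodule.mem_bot K).1 h_mem).trans (map_zero f).symm))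
  · have h_mem : f x ∈ (mapSubrep f S ⊔ T).toSubmodule := hT.sup_eq_top ▸ Submodule.mem_top
    obtain ⟨_, ⟨s, hs, rfl⟩, t, ht, h_add⟩ := Submodule.mem_sup.1 h_mem
    refine Submodule.mem_sup.2 ⟨s, hs, x - s, ?_, add_sub_cancel s x⟩
    have ht_eq : f (x - s) = t := by
      rw [map_sub, sub_eq_iff_eq_add', ← h_add]
      rfl
    exact (ht_eq ▸ ht : f (x - s) ∈ T)

section StarRepresentation

variable {𝕜 H E F : Type*} [RCLike 𝕜] [Monoid H] [Star H] [NormedAddCommGroup E]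
  [InnerProductSpace 𝕜 E] [NormedAddCommGroup F] [InnerProductSpace 𝕜 F]
  {π : Representation 𝕜 H E} {τ : Representation 𝕜 H F}

/-- `π` is a `*`-representation: `π (star g)` is adjoint to `π g`. For `H = GL_n(ℂ)`, where `star`
is the conjugate transpose, this makes the restriction of `π` to `U(n)` unitary. -/
def IsStarRepresentation (π : Representation 𝕜 H E) : Prop :=
  ∀ g x y, inner 𝕜 (π (star g) x) y = inner 𝕜 x (π g y)

/-- The orthogonal complement of a subrepresentation of a `*`-representation. -/
def orthogonalSubrep (hπ : IsStarRepresentation π) (S : Subrepresentation π) :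
    Subrepresentation π where
  toSubmodule := S.toSubmoduleᗮ
  apply_mem_toSubmodule g x hx y hy := by
    rw [← hπ]
    exact hx _ (S.apply_mem_toSubmodule _ hy)

theorem IsStarRepresentation.isSemisimpleRepresentation [FiniteDimensional 𝕜 E]
    (hπ : IsStarRepresentation π) : π.IsSemisimpleRepresentation := by
  refine ⟨fun S => ⟨orthogonalSubrep hπ S, disjoint_iff.2 ?_, codisjoint_iff.2 ?_⟩⟩
  · exact Subrepresentation.toSubmodule_injective S.toSubmodule.inf_orthogonal_eq_bot
  · exact Subrepresentation.toSubmodule_injective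
      Submodule.sup_orthogonal_of_hasOrthogonalProjection

theorem IsStarRepresentation.comp {L : Type*} [Monoid L] [Star L] (hπ : IsStarRepresentation π)
    {φ : L →* H} (hφ : ∀ g, φ (star g) = star (φ g)) :
    IsStarRepresentation (MonoidHom.comp π φ : Representation 𝕜 L E) := fun g x y => by
  rw [MonoidHom.comp_apply, MonoidHom.comp_apply, hφ, hπ]

theorem IsStarRepresentation.tprod (hπ : IsStarRepresentation π) (hτ : IsStarRepresentation τ) :
    IsStarRepresentation (π.tprod τ) := fun g x y => by
  induction x with
  | zero => simp only [map_zero, inner_zero_left]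
  | add x x' hx hx' => simp only [map_add, inner_add_left, hx, hx']
  | tmul a b =>
    induction y with
    | zero => simp only [map_zero, inner_zero_right]
    | add y y' hy hy' => simp only [map_add, inner_add_right, hy, hy']
    | tmul c d =>
      simp only [Representation.tprod_apply, TensorProduct.map_tmul, TensorProduct.inner_tmul,
        hπ g, hτ g]

end StarRepresentation

end Semisimplicity

section TensorPower

theorem submatrix_eq_one_submatrix_mul {m R : Type*} [DecidableEq m] [CommRing R] {S : Finset m}
    {A : Matrix m m R} (hA : ∀ i ∉ S, ∀ j ∈ S, A i j = 0) :
    A.submatrix id ((↑) : S → m) =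
      (1 : Matrix m m R).submatrix id ((↑) : S → m) *
        A.submatrix ((↑) : S → m) ((↑) : S → m) := by
  ext i b
  rw [Matrix.mul_apply]
  change A i b = ∑ c : S, (1 : Matrix m m R) i c * A c b
  rw [Finset.sum_coe_sort S fun c => (1 : Matrix m m R) i c * A c b]
  simp only [Matrix.one_apply, ite_mul, one_mul, zero_mul, Finset.sum_ite_eq]
  split_ifs with hi
  · rfl
  · exact hA i hi b b.2

variable {ι m R : Type*} [Fintype ι] [DecidableEq ι] [DecidableEq m] [CommRing R]

/-- The decomposable antisymmetric tensor `⋀ₐ e_{f a}` in the `ι`-fold tensor power of `R^m`. -/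
def wedgeVector (f : ι → m) (I : ι → m) : R := ((1 : Matrix m m R).submatrix I f).det

theorem wedgeVector_ne_zero [Nontrivial R] {f : ι → m} (hf : Function.Injective f) :
    (wedgeVector f : (ι → m) → R) ≠ 0 := by
  refine Function.ne_iff.2 ⟨f, ?_⟩
  rw [wedgeVector, Matrix.submatrix_one f hf, Matrix.det_one]
  exact one_ne_zero

variable [Fintype m]

variable (ι) in
/-- The `ι`-fold tensor power of a matrix, acting on the `ι`-fold tensor power of `R^m`. -/
def tensorPowerMatrix : Matrix m m R →* Matrix (ι → m) (ι → m) R where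
  toFun A := Matrix.of fun I J => ∏ a, A (I a) (J a)
  map_one' := by
    ext I J
    simp only [Matrix.of_apply, Matrix.one_apply, Finset.prod_ite_zero, funext_iff,
      Finset.mem_univ, true_imp_iff, Finset.prod_const_one]
  map_mul' A B := by
    ext I J
    simp only [Matrix.of_apply, Matrix.mul_apply, Finset.prod_univ_sum, Fintype.piFinset_univ,
      Finset.prod_mul_distrib]

theorem tensorPowerMatrix_conjTranspose [StarRing R] (A : Matrix m m R) :
    tensorPowerMatrix ι Aᴴ = (tensorPowerMatrix ι A)ᴴ := by
  ext I J
  exact (map_prod (starRingEnd R) _ _).symm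

theorem tensorPowerMatrix_mulVec_wedgeVector (A : Matrix m m R) (f : ι → m) :
    tensorPowerMatrix ι A *ᵥ wedgeVector f = fun I => (A.submatrix I f).det := by
  funext I
  have h_rows :
      A.submatrix I f = fun a => ∑ j, A (I a) j • fun b => (1 : Matrix m m R) j (f b) := by
    funext a b
    simp only [Matrix.submatrix_apply, Finset.sum_apply, Pi.smul_apply, smul_eq_mul,
      ← Matrix.mul_apply, mul_one]
  change _ = Matrix.detRowAlternating (A.submatrix I f)
  rw [h_rows]
  refine Eq.trans (Finset.sum_congr rfl fun J _ => ?_)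
    ((Matrix.detRowAlternating (n := ι) (R := R)).toMultilinearMap.map_sum
      fun a j => A (I a) j • fun b => (1 : Matrix m m R) j (f b)).symm
  rw [MultilinearMap.map_smul_univ]
  rfl

theorem tensorPowerMatrix_mulVec_wedgeVector_of_submatrix_eq {A : Matrix m m R} {f : ι → m}
    {B : Matrix ι ι R} (h : A.submatrix id f = (1 : Matrix m m R).submatrix id f * B) :
    tensorPowerMatrix ι A *ᵥ wedgeVector f = B.det • wedgeVector f := by
  rw [tensorPowerMatrix_mulVec_wedgeVector]
  funext I
  have h_rows : A.submatrix I f = (1 : Matrix m m R).submatrix I f * B :=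
    congrArg (fun M => M.submatrix I id) h
  rw [h_rows, Matrix.det_mul, mul_comm]
  rfl

theorem tensorPowerMatrix_mulVec_wedgeVector_of_isUpperTriangular [LinearOrder m] {S : Finset m}
    (hS : IsLowerSet (S : Set m)) {A : Matrix m m R} (hA : A.IsUpperTriangular) :
    tensorPowerMatrix S A *ᵥ wedgeVector ((↑) : S → m) =
      (∏ i ∈ S, A i i) • wedgeVector ((↑) : S → m) := by
  have h_upper : (A.submatrix ((↑) : S → m) (↑)).IsUpperTriangular := fun i j hij => hA hij
  have h_det : (A.submatrix ((↑) : S → m) (↑)).det = ∏ i ∈ S, A i i :=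
    (Matrix.det_of_isUpperTriangular h_upper).trans (Finset.prod_coe_sort S fun i => A i i)
  rw [← h_det]
  exact tensorPowerMatrix_mulVec_wedgeVector_of_submatrix_eq <|
    submatrix_eq_one_submatrix_mul fun i hi j hj =>
      hA (lt_of_not_ge fun h : i ≤ j => hi (hS h hj))

end TensorPower

section StarModels

variable {n : ℕ} {ω ν : Fin n → ℤ}

theorem IsHighestWeightVector.tmul {V W : Type*} [AddCommGroup V] [Module ℂ V] [AddCommGroup W]
    [Module ℂ W] {ρ : Representation ℂ (GL (Fin n) ℂ) V} {σ : Representation ℂ (GL (Fin n) ℂ) W}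
    {v : V} {w : W} (hv : IsHighestWeightVector ρ ω v) (hw : IsHighestWeightVector σ ν w) :
    IsHighestWeightVector (ρ.tprod σ) (ω + ν) (v ⊗ₜ[ℂ] w) where
  isWeightVector t := by
    rw [Representation.tprod_apply, TensorProduct.map_tmul, hv.isWeightVector,
      hw.isWeightVector, TensorProduct.smul_tmul_smul, ← Finset.prod_mul_distrib]
    simp only [Pi.add_apply, zpow_add₀ (t _).ne_zero]
  apply_transvectionGL i j hij a := by
    rw [Representation.tprod_apply, TensorProduct.map_tmul,
      hv.apply_transvectionGL i j hij, hw.apply_transvectionGL i j hij]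

/-- The one-dimensional representation `det ^ z`. -/
def detPowRep (n : ℕ) (z : ℤ) : Representation ℂ (GL (Fin n) ℂ) ℂ :=
  (Algebra.lmul ℂ ℂ : ℂ →* Module.End ℂ ℂ).comp
    ((Units.coeHom ℂ).comp ((zpowGroupHom z).comp Matrix.GeneralLinearGroup.det))

theorem detPowRep_apply (z : ℤ) (g : GL (Fin n) ℂ) (x : ℂ) :
    detPowRep n z g x = (g : Matrix (Fin n) (Fin n) ℂ).det ^ z * x := by
  simp [detPowRep]

theorem isStarRepresentation_detPowRep (n : ℕ) (z : ℤ) :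
    IsStarRepresentation (detPowRep n z) := fun g x y => by
  have h_det : ((star g : GL (Fin n) ℂ) : Matrix (Fin n) (Fin n) ℂ).det =
      star (g : Matrix (Fin n) (Fin n) ℂ).det := Matrix.det_conjTranspose _
  simp only [detPowRep_apply, h_det, RCLike.inner_apply, map_mul, map_zpow₀, starRingEnd_apply,
    star_star]
  ring

theorem isHighestWeightVector_detPowRep (z : ℤ) :
    IsHighestWeightVector (detPowRep n z) (fun _ => z) 1 where
  isWeightVector t := by
    rw [detPowRep_apply, coe_diagGL, Matrix.det_diagonal, Finset.prod_zpow, smul_eq_mul]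
  apply_transvectionGL i j hij a := by
    rw [detPowRep_apply, coe_transvectionGL, Matrix.det_transvection_of_ne i j hij.ne,
      _root_.one_zpow, one_mul]

/-- The `ι`-fold tensor power of the standard representation of `GL_n(ℂ)`, with its standard
Hermitian inner product. -/
def tensorPowerRep (n : ℕ) (ι : Type*) [Fintype ι] [DecidableEq ι] :
    Representation ℂ (GL (Fin n) ℂ) (EuclideanSpace ℂ (ι → Fin n)) :=
  (MonoidHomClass.toMonoidHom (Matrix.toLpLinAlgEquiv (R := ℂ) 2)).comp
    ((tensorPowerMatrix ι).comp (Units.coeHom (Matrix (Fin n) (Fin n) ℂ)))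

theorem tensorPowerRep_apply {ι : Type*} [Fintype ι] [DecidableEq ι] (g : GL (Fin n) ℂ) :
    tensorPowerRep n ι g = Matrix.toEuclideanLin (tensorPowerMatrix ι (g : Matrix _ _ ℂ)) :=
  rfl

theorem isStarRepresentation_tensorPowerRep (n : ℕ) (ι : Type*) [Fintype ι] [DecidableEq ι] :
    IsStarRepresentation (tensorPowerRep n ι) := fun g x y => by
  have h_star : ((star g : GL (Fin n) ℂ) : Matrix (Fin n) (Fin n) ℂ) =
      (g : Matrix (Fin n) (Fin n) ℂ)ᴴ := rfl
  rw [tensorPowerRep_apply, tensorPowerRep_apply, h_star, tensorPowerMatrix_conjTranspose,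
    Matrix.toEuclideanLin_conjTranspose_eq_adjoint, LinearMap.adjoint_inner_left]

theorem isHighestWeightVector_wedgeVector {S : Finset (Fin n)}
    (hS : IsLowerSet (S : Set (Fin n))) :
    IsHighestWeightVector (tensorPowerRep n S) (fun i => if i ∈ S then 1 else 0)
      (WithLp.toLp 2 (wedgeVector ((↑) : S → Fin n))) where
  isWeightVector t := by
    rw [tensorPowerRep_apply, Matrix.toLpLin_toLp, Matrix.toLin'_apply, coe_diagGL,
      tensorPowerMatrix_mulVec_wedgeVector_of_isUpperTriangular hS
        (Matrix.blockTriangular_diagonal _), WithLp.toLp_smul]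
    have h_prod : ∏ i, (t i : ℂ) ^ (if i ∈ S then 1 else 0 : ℤ) = ∏ i ∈ S, (t i : ℂ) := by
      simp only [apply_ite, zpow_one, zpow_zero, Finset.prod_ite_mem, Finset.univ_inter]
    simp only [Matrix.diagonal_apply_eq, h_prod]
  apply_transvectionGL i j hij a := by
    rw [tensorPowerRep_apply, Matrix.toLpLin_toLp, Matrix.toLin'_apply, coe_transvectionGL,
      tensorPowerMatrix_mulVec_wedgeVector_of_isUpperTriangular hS
        (Matrix.blockTriangular_transvection hij.le a)]
    simp only [transvection_apply_self hij.ne, Finset.prod_const_one, one_smul]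

/-- `ω` is the weight of a highest weight vector in some finite-dimensional representation that
respects the Hermitian adjoint. -/
def HasStarModel (ω : Fin n → ℤ) : Prop :=
  ∃ (E : Type) (_ : NormedAddCommGroup E) (_ : InnerProductSpace ℂ E) (_ : FiniteDimensional ℂ E)
    (π : Representation ℂ (GL (Fin n) ℂ) E),
    IsStarRepresentation π ∧ ∃ e ≠ 0, IsHighestWeightVector π ω e

theorem HasStarModel.add (hω : HasStarModel ω) (hν : HasStarModel ν) : HasStarModel (ω + ν) := by
  obtain ⟨E, _, _, _, π, hπ, e, he_ne, he⟩ := hω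
  obtain ⟨F, _, _, _, τ, hτ, f, hf_ne, hf⟩ := hν
  refine ⟨TensorProduct ℂ E F, inferInstance, inferInstance, inferInstance, π.tprod τ,
    hπ.tprod hτ, e ⊗ₜ[ℂ] f, ?_, he.tmul hf⟩
  rw [← norm_ne_zero_iff, TensorProduct.norm_tmul]
  exact mul_ne_zero (norm_ne_zero_iff.2 he_ne) (norm_ne_zero_iff.2 hf_ne)

theorem hasStarModel_const (n : ℕ) (z : ℤ) : HasStarModel fun _ : Fin n => z :=
  ⟨ℂ, inferInstance, inferInstance, inferInstance, detPowRep n z,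
    isStarRepresentation_detPowRep n z, 1, one_ne_zero, isHighestWeightVector_detPowRep z⟩

theorem hasStarModel_indicator {S : Finset (Fin n)} (hS : IsLowerSet (S : Set (Fin n))) :
    HasStarModel fun i => if i ∈ S then 1 else 0 := by
  refine ⟨_, inferInstance, inferInstance, inferInstance, tensorPowerRep n S,
    isStarRepresentation_tensorPowerRep n S, _, ?_, isHighestWeightVector_wedgeVector hS⟩
  rw [Ne, WithLp.toLp_eq_zero]
  exact wedgeVector_ne_zero Subtype.coe_injective

theorem hasStarModel_of_antitone_of_mem_Icc (c : ℤ) (N : ℕ) (hω : Antitone ω)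
    (h_mem : ∀ i, ω i ∈ Set.Icc c (c + N)) : HasStarModel ω := by
  induction N generalizing ω with
  | zero =>
    have h_const : ω = fun _ => c := funext fun i => by simpa using h_mem i
    exact h_const ▸ hasStarModel_const n c
  | succ N ih =>
    let S : Finset (Fin n) := {i | c + N < ω i}
    have hS : IsLowerSet (S : Set (Fin n)) := fun i j hji hi => by
      simp only [S, Finset.coe_filter, Finset.mem_univ, true_and, Set.mem_ofPred_eq] at hi ⊢
      exact hi.trans_le (hω hji)
    have h_min : HasStarModel fun i => min (ω i) (c + N) :=
      ih (hω.min antitone_const) fun i => ⟨le_min (h_mem i).1 (by lia), min_le_right _ _⟩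
    convert h_min.add (hasStarModel_indicator hS) using 1
    funext i
    have h_le := (h_mem i).2
    simp only [S, Pi.add_apply, Finset.mem_filter, Finset.mem_univ, true_and]
    grind

theorem hasStarModel_of_antitone (hω : Antitone ω) : HasStarModel ω := by
  obtain ⟨c, hc⟩ := (Set.finite_range ω).bddBelow
  obtain ⟨d, hd⟩ := (Set.finite_range ω).bddAbove
  refine hasStarModel_of_antitone_of_mem_Icc c (d - c).toNat hω fun i => ?_
  have h_ge : c ≤ ω i := hc ⟨i, rfl⟩
  have h_le : ω i ≤ d := hd ⟨i, rfl⟩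
  exact ⟨h_ge, by lia⟩

-- The cyclic subrepresentation of the model is an atom, so `ρ` embeds into it and inherits
-- semisimplicity of the restriction from the orthogonal complements there.
theorem IsHighestWeightVector.isSemisimpleRepresentation_comp {H V : Type*} [Monoid H] [Star H]
    [AddCommGroup V] [Module ℂ V] [FiniteDimensional ℂ V] {ρ : Representation ℂ (GL (Fin n) ℂ) V}
    [ρ.IsIrreducible] {v : V} (hv : IsHighestWeightVector ρ ω v) (hv_ne : v ≠ 0) (hω : Antitone ω)
    {φ : H →* GL (Fin n) ℂ} (hφ : ∀ h, φ (star h) = star (φ h)) :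
    Representation.IsSemisimpleRepresentation (MonoidHom.comp ρ φ : Representation ℂ H V) := by
  obtain ⟨E, _, _, _, π, hπ, e, he_ne, he⟩ := hasStarModel_of_antitone hω
  have : π.IsSemisimpleRepresentation := hπ.isSemisimpleRepresentation
  have : Representation.IsSemisimpleRepresentation (MonoidHom.comp π φ : Representation ℂ H E) :=
    (hπ.comp hφ).isSemisimpleRepresentation
  obtain ⟨f, hf⟩ := hv.exists_intertwiningMap_apply_eq hv_ne he (he.isAtom_cyclicSubrep he_ne)
  have hf_inj : Function.Injective f := by
    refine (Representation.IsIrreducible.injective_or_eq_zero f).resolve_right ?_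
    rintro rfl
    exact he_ne hf.symm
  let f' : Representation.IntertwiningMap (MonoidHom.comp ρ φ : Representation ℂ H V)
      (MonoidHom.comp π φ : Representation ℂ H E) :=
    { toLinearMap := f.toLinearMap
      isIntertwining' := fun h => f.isIntertwining' (φ h) }
  exact isSemisimpleRepresentation_of_injective f' hf_inj

end StarModels

section Permutation

variable {n : ℕ}

/-- The permutation matrix with `e_i ↦ e_{s i}`, as an element of `GL_n(ℂ)`. -/
def permGL : Equiv.Perm (Fin n) →* GL (Fin n) ℂ :=
  (Matrix.permMatrixHom : Equiv.Perm (Fin n) →* Matrix (Fin n) (Fin n) ℂ).toHomUnits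

theorem coe_permGL_conj (s : Equiv.Perm (Fin n)) (g : GL (Fin n) ℂ) :
    ((permGL s * g * (permGL s)⁻¹ : GL (Fin n) ℂ) : Matrix (Fin n) (Fin n) ℂ) =
      (g : Matrix (Fin n) (Fin n) ℂ).submatrix s.symm s.symm := by
  rw [← map_inv, Units.val_mul, Units.val_mul]
  simp only [permGL, MonoidHom.coe_toHomUnits, Matrix.permMatrixHom_apply, inv_inv,
    PEquiv.toMatrix_toPEquiv_mul, PEquiv.mul_toMatrix_toPEquiv, Matrix.submatrix_submatrix]
  rfl

theorem permGL_conj_diagGL (s : Equiv.Perm (Fin n)) (t : Fin n → ℂˣ) :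
    permGL s * diagGL t * (permGL s)⁻¹ = diagGL (t ∘ s.symm) := by
  ext : 1
  rw [coe_permGL_conj, coe_diagGL, coe_diagGL, Matrix.submatrix_diagonal_equiv]
  rfl

theorem permGL_conj_transvectionGL (s : Equiv.Perm (Fin n)) {i j : Fin n} (hij : i ≠ j)
    (a : ℂ) :
    permGL s * transvectionGL hij a * (permGL s)⁻¹ = transvectionGL (s.injective.ne hij) a := by
  ext : 1
  rw [coe_permGL_conj, coe_transvectionGL, coe_transvectionGL]
  ext p q
  simp only [Matrix.transvection, Matrix.submatrix_apply, Matrix.add_apply, Matrix.one_apply,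
    Matrix.single_apply, s.symm.injective.eq_iff, Equiv.eq_symm_apply]

variable {V : Type*} [AddCommGroup V] [Module ℂ V] {ρ : Representation ℂ (GL (Fin n) ℂ) V}
  {ω : Fin n → ℤ} {x : V}

theorem IsWeightVector.apply_permGL_inv (hx : IsWeightVector ρ ω x) (s : Equiv.Perm (Fin n)) :
    IsWeightVector ρ (ω ∘ s) (ρ (permGL s)⁻¹ x) := fun t => by
  have h_comm : diagGL t * (permGL s)⁻¹ = (permGL s)⁻¹ * diagGL (t ∘ s.symm) := by
    rw [← permGL_conj_diagGL]
    group
  rw [← Module.End.mul_apply, ← map_mul, h_comm, map_mul, Module.End.mul_apply, hx, map_smul,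
    ← Equiv.prod_comp s]
  simp only [Function.comp_apply, Equiv.symm_apply_apply]

theorem IsHighestWeightVector.apply_transvectionGL_permGL_inv (hx : IsHighestWeightVector ρ ω x)
    (s : Equiv.Perm (Fin n)) {i j : Fin n} (hij : i ≠ j) (h_lt : s i < s j) (a : ℂ) :
    ρ (transvectionGL hij a) (ρ (permGL s)⁻¹ x) = ρ (permGL s)⁻¹ x := by
  have h_comm : transvectionGL hij a * (permGL s)⁻¹ =
      (permGL s)⁻¹ * transvectionGL h_lt.ne a := by
    rw [← permGL_conj_transvectionGL s hij]
    group
  rw [← Module.End.mul_apply, ← map_mul, h_comm, map_mul, Module.End.mul_apply,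
    hx.apply_transvectionGL _ _ h_lt]

end Permutation

section Blocks

variable {m k : ℕ}

theorem coe_embTL (g : GL (Fin m) ℂ) : (embTL m k g : Matrix (Fin (m + k)) (Fin (m + k)) ℂ) =
    Matrix.reindex finSumFinEquiv finSumFinEquiv (Matrix.fromBlocks g 0 0 1) := rfl

theorem coe_embBR (g : GL (Fin k) ℂ) : (embBR m k g : Matrix (Fin (m + k)) (Fin (m + k)) ℂ) =
    Matrix.reindex finSumFinEquiv finSumFinEquiv (Matrix.fromBlocks 1 0 0 g) := rfl

theorem embTL_star (g : GL (Fin m) ℂ) : embTL m k (star g) = star (embTL m k g) := by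
  ext : 1
  simp only [Units.coe_star, coe_embTL, Matrix.star_eq_conjTranspose,
    Matrix.conjTranspose_reindex, Matrix.fromBlocks_conjTranspose, Matrix.conjTranspose_zero,
    Matrix.conjTranspose_one]

theorem embBR_star (g : GL (Fin k) ℂ) : embBR m k (star g) = star (embBR m k g) := by
  ext : 1
  simp only [Units.coe_star, coe_embBR, Matrix.star_eq_conjTranspose,
    Matrix.conjTranspose_reindex, Matrix.fromBlocks_conjTranspose, Matrix.conjTranspose_zero,
    Matrix.conjTranspose_one]

theorem embTL_commute_embBR (g : GL (Fin m) ℂ) (h : GL (Fin k) ℂ) :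
    Commute (embTL m k g) (embBR m k h) := by
  ext : 1
  simp only [Units.val_mul, coe_embTL, coe_embBR, Matrix.reindex_apply,
    Matrix.submatrix_mul_equiv, Matrix.fromBlocks_multiply, Matrix.mul_zero, Matrix.zero_mul,
    Matrix.mul_one, Matrix.one_mul, add_zero, zero_add]

theorem diagGL_append (t : Fin m → ℂˣ) (u : Fin k → ℂˣ) :
    diagGL (Fin.append t u) = embTL m k (diagGL t) * embBR m k (diagGL u) := by
  ext : 1
  simp only [Units.val_mul, coe_embTL, coe_embBR, coe_diagGL, Matrix.reindex_apply,
    Matrix.submatrix_mul_equiv, Matrix.fromBlocks_multiply, Matrix.mul_zero, Matrix.zero_mul,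
    Matrix.mul_one, Matrix.one_mul, add_zero, zero_add, Matrix.fromBlocks_diagonal,
    Matrix.submatrix_diagonal_equiv]
  congr 1
  funext i
  induction i using Fin.addCases <;> simp

theorem diagGL_one {n : ℕ} : diagGL (1 : Fin n → ℂˣ) = 1 :=
  Units.ext Matrix.diagonal_one

theorem embTL_transvectionGL {i j : Fin m} (hij : i ≠ j) (a : ℂ) :
    embTL m k (transvectionGL hij a) =
      transvectionGL ((Fin.castAdd_injective m k).ne hij) a := by
  have h_ne (p : Fin m) (q : Fin k) : Fin.castAdd k p ≠ Fin.natAdd m q :=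
    Fin.ne_of_val_ne (by grind)
  ext p q
  simp only [coe_embTL, coe_transvectionGL, Matrix.transvection, Matrix.reindex_apply,
    Matrix.submatrix_apply, Matrix.add_apply, Matrix.one_apply, Matrix.single_apply]
  induction p using Fin.addCases <;> induction q using Fin.addCases <;>
    simp [Matrix.one_apply, Matrix.single_apply, h_ne, (h_ne _ _).symm]

theorem embBR_transvectionGL {i j : Fin k} (hij : i ≠ j) (a : ℂ) :
    embBR m k (transvectionGL hij a) =
      transvectionGL ((Fin.natAdd_injective k m).ne hij) a := by
  have h_ne (p : Fin m) (q : Fin k) : Fin.castAdd k p ≠ Fin.natAdd m q :=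
    Fin.ne_of_val_ne (by grind)
  ext p q
  simp only [coe_embBR, coe_transvectionGL, Matrix.transvection, Matrix.reindex_apply,
    Matrix.submatrix_apply, Matrix.add_apply, Matrix.one_apply, Matrix.single_apply]
  induction p using Fin.addCases <;> induction q using Fin.addCases <;>
    simp [Matrix.one_apply, Matrix.single_apply, h_ne, (h_ne _ _).symm]

variable {V : Type*} [AddCommGroup V] [Module ℂ V] {ρ : Representation ℂ (GL (Fin (m + k)) ℂ) V}
  {ω : Fin (m + k) → ℤ} {v x : V}

/-- The restriction of a representation of `GL_{m+k}(ℂ)` to the factor `GL_m(ℂ)`. -/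
abbrev restrictTL (ρ : Representation ℂ (GL (Fin (m + k)) ℂ) V) :
    Representation ℂ (GL (Fin m) ℂ) V :=
  MonoidHom.comp ρ (embTL m k)

/-- The restriction of a representation of `GL_{m+k}(ℂ)` to the factor `GL_k(ℂ)`. -/
abbrev restrictBR (ρ : Representation ℂ (GL (Fin (m + k)) ℂ) V) :
    Representation ℂ (GL (Fin k) ℂ) V :=
  MonoidHom.comp ρ (embBR m k)

theorem IsWeightVector.restrictTL (hx : IsWeightVector ρ ω x) :
    IsWeightVector (restrictTL ρ) (fun i => ω (Fin.castAdd k i)) x := fun t => by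
  have h_eq : embTL m k (diagGL t) = diagGL (Fin.append t 1) := by
    rw [diagGL_append, diagGL_one, map_one, mul_one]
  rw [MonoidHom.comp_apply, h_eq, hx, Fin.prod_univ_add]
  simp

theorem IsWeightVector.restrictBR (hx : IsWeightVector ρ ω x) :
    IsWeightVector (restrictBR ρ) (fun i => ω (Fin.natAdd m i)) x := fun t => by
  have h_eq : embBR m k (diagGL t) = diagGL (Fin.append 1 t) := by
    rw [diagGL_append, diagGL_one, map_one, one_mul]
  rw [MonoidHom.comp_apply, h_eq, hx, Fin.prod_univ_add]
  simp

theorem isWeightVector_of_restrictTL_of_restrictBR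
    (hTL : IsWeightVector (restrictTL ρ) (fun i => ω (Fin.castAdd k i)) x)
    (hBR : IsWeightVector (restrictBR ρ) (fun i => ω (Fin.natAdd m i)) x) :
    IsWeightVector ρ ω x := fun t => by
  have h_append : Fin.append (fun i => t (Fin.castAdd k i)) (fun i => t (Fin.natAdd m i)) = t :=
    Fin.append_castAdd_natAdd
  have hTL_t := hTL fun i => t (Fin.castAdd k i)
  have hBR_t := hBR fun i => t (Fin.natAdd m i)
  rw [MonoidHom.comp_apply] at hTL_t hBR_t
  rw [← h_append, diagGL_append, map_mul, Module.End.mul_apply, hBR_t, map_smul, hTL_t,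
    smul_smul, h_append, Fin.prod_univ_add, mul_comm]

theorem IsHighestWeightVector.restrictTL_permGL_inv (hv : IsHighestWeightVector ρ ω v)
    {s : Equiv.Perm (Fin (m + k))} (hs : StrictMono fun i => s (Fin.castAdd k i)) :
    IsHighestWeightVector (restrictTL ρ) (fun i => ω (s (Fin.castAdd k i)))
      (ρ (permGL s)⁻¹ v) where
  isWeightVector := (hv.isWeightVector.apply_permGL_inv s).restrictTL
  apply_transvectionGL i j hij a := by
    rw [MonoidHom.comp_apply, embTL_transvectionGL,
      hv.apply_transvectionGL_permGL_inv s _ (hs hij)]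

theorem IsHighestWeightVector.restrictBR_permGL_inv (hv : IsHighestWeightVector ρ ω v)
    {s : Equiv.Perm (Fin (m + k))} (hs : StrictMono fun i => s (Fin.natAdd m i)) :
    IsHighestWeightVector (restrictBR ρ) (fun i => ω (s (Fin.natAdd m i)))
      (ρ (permGL s)⁻¹ v) where
  isWeightVector := (hv.isWeightVector.apply_permGL_inv s).restrictBR
  apply_transvectionGL i j hij a := by
    rw [MonoidHom.comp_apply, embBR_transvectionGL,
      hv.apply_transvectionGL_permGL_inv s _ (hs hij)]

end Blocks

section Bipartition

theorem mem_iff_lt_card_of_isLowerSet {n : ℕ} {S : Finset (Fin n)}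
    (hS : IsLowerSet (S : Set (Fin n))) {i : Fin n} : i ∈ S ↔ (i : ℕ) < S.card := by
  constructor
  · intro hi
    have h_card := Finset.card_le_card fun j hj => hS (Finset.mem_Iic.1 hj) hi
    rw [Fin.card_Iic] at h_card
    lia
  · contrapose!
    intro hi
    have h_card := Finset.card_le_card fun j hj =>
      Finset.mem_Iio.2 (lt_of_not_ge fun hij => hi (hS hij hj))
    rwa [Fin.card_Iio] at h_card

variable {n : ℕ} {ω : Fin n → ℤ}

theorem pos_iff_lt_lenPos (hω : Antitone ω) {i : Fin n} : 0 < ω i ↔ (i : ℕ) < lenPos ω := by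
  rw [lenPos, ← mem_iff_lt_card_of_isLowerSet]
  · simp only [Finset.mem_filter, Finset.mem_univ, true_and]
  · intro i j hji hi
    simp only [Finset.coe_filter, Finset.mem_univ, true_and, Set.mem_ofPred_eq] at hi ⊢
    exact hi.trans_le (hω hji)

theorem lenNeg_eq_lenPos_rev : lenNeg ω = lenPos fun i => -ω i.rev := by
  rw [lenNeg, lenPos]
  exact Finset.card_bijective Fin.rev Fin.rev_bijective (by simp)

theorem neg_iff_sub_lenNeg_le (hω : Antitone ω) {i : Fin n} :
    ω i < 0 ↔ n - lenNeg ω ≤ (i : ℕ) := by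
  have h_anti : Antitone fun i : Fin n => -ω i.rev :=
    fun i j hij => neg_le_neg (hω (Fin.rev_le_rev.2 hij))
  have h_pos := pos_iff_lt_lenPos h_anti (i := i.rev)
  rw [← lenNeg_eq_lenPos_rev, Fin.rev_rev, Left.neg_pos_iff, Fin.val_rev] at h_pos
  lia

theorem eq_zero_of_lenPos_le_of_lt_sub_lenNeg (hω : Antitone ω) {i : Fin n}
    (h_pos : lenPos ω ≤ i) (h_neg : (i : ℕ) < n - lenNeg ω) : ω i = 0 :=
  le_antisymm (not_lt.1 fun h => h_pos.not_gt ((pos_iff_lt_lenPos hω).1 h))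
    (not_lt.1 fun h => h_neg.not_ge ((neg_iff_sub_lenNeg_le hω).1 h))

/-- The permutation that opens a gap of length `k` after position `p`: positions `< m` are
inserted in increasing order around the gap, the last `k` positions fill it. -/
def gapPerm (m k p : ℕ) (hp : p ≤ m) : Equiv.Perm (Fin (m + k)) where
  toFun i := ⟨if (i : ℕ) < p then i else if (i : ℕ) < m then i + k else p + (i - m), by grind⟩
  invFun i := ⟨if (i : ℕ) < p then i else if (i : ℕ) < p + k then m + (i - p) else i - k, by grind⟩
  left_inv i := by grind
  right_inv i := by grind

variable {m k p : ℕ} {hp : p ≤ m}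

theorem val_gapPerm_castAdd (i : Fin m) :
    (gapPerm m k p hp (Fin.castAdd k i) : ℕ) = if (i : ℕ) < p then (i : ℕ) else i + k := by
  simp [gapPerm]

theorem val_gapPerm_natAdd (i : Fin k) : (gapPerm m k p hp (Fin.natAdd m i) : ℕ) = p + i := by
  have h_not : ¬m + (i : ℕ) < p := by lia
  simp [gapPerm, h_not]

theorem strictMono_gapPerm_castAdd : StrictMono fun i => gapPerm m k p hp (Fin.castAdd k i) :=
  fun i j hij => by
    rw [Fin.lt_def] at hij ⊢
    grind [val_gapPerm_castAdd]

theorem strictMono_gapPerm_natAdd : StrictMono fun i => gapPerm m k p hp (Fin.natAdd m i) :=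
  fun i j hij => by
    rw [Fin.lt_def] at hij ⊢
    grind [val_gapPerm_natAdd]

variable {ω : Fin (m + k) → ℤ}

theorem restrWeight_eq_gapPerm (hω : Antitone ω) (hlen : lenPos ω + lenNeg ω ≤ m) :
    restrWeight m k ω =
      fun i => ω (gapPerm m k (lenPos ω) (Nat.le_of_add_right_le hlen) (Fin.castAdd k i)) := by
  funext i
  have h_val := val_gapPerm_castAdd (k := k) (hp := Nat.le_of_add_right_le hlen) i
  simp only [restrWeight]
  split_ifs with h_lt h_le
  · rw [if_pos h_lt] at h_val
    exact congrArg ω (Fin.ext h_val.symm)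
  · rw [if_neg h_lt] at h_val
    exact congrArg ω (Fin.ext h_val.symm)
  · rw [if_neg h_lt] at h_val
    exact (eq_zero_of_lenPos_le_of_lt_sub_lenNeg hω (by lia) (by lia)).symm

theorem gapPerm_natAdd_eq_zero (hω : Antitone ω) (hlen : lenPos ω + lenNeg ω ≤ m) (i : Fin k) :
    ω (gapPerm m k (lenPos ω) (Nat.le_of_add_right_le hlen) (Fin.natAdd m i)) = 0 := by
  have h_val := val_gapPerm_natAdd (hp := Nat.le_of_add_right_le hlen) i
  exact eq_zero_of_lenPos_le_of_lt_sub_lenNeg hω (by lia) (by lia)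

end Bipartition

section Branching

theorem IsHighestWeightVector.apply_eq_self_of_weight_zero {k : ℕ} {V : Type*} [AddCommGroup V]
    [Module ℂ V] [FiniteDimensional ℂ V] {ρ : Representation ℂ (GL (Fin k) ℂ) V}
    [ρ.IsSemisimpleRepresentation] {v : V} (hv : IsHighestWeightVector ρ (fun _ => 0) v)
    (g : GL (Fin k) ℂ) : ρ g v = v := by
  rcases eq_or_ne v 0 with rfl | hv_ne
  · rw [map_zero]
  have : (detPowRep k 0).IsIrreducible :=
    isIrreducible_of_forall_submodule fun S _ => eq_bot_or_eq_top S
  obtain ⟨f, rfl⟩ := (isHighestWeightVector_detPowRep 0).exists_intertwiningMap_apply_eq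
    (one_ne_zero (α := ℂ)) hv (hv.isAtom_cyclicSubrep hv_ne)
  rw [← f.isIntertwining, detPowRep_apply, zpow_zero, one_mul]

variable {m k : ℕ} {ω : Fin (m + k) → ℤ} {V W : Type*} [AddCommGroup V] [Module ℂ V]
  [AddCommGroup W] [Module ℂ W] {ρ : Representation ℂ (GL (Fin (m + k)) ℂ) V}
  {σ : Representation ℂ (GL (Fin m) ℂ) W} {v x : V} {w : W}

theorem apply_embBR_eq_self_of_apply_eq [σ.IsIrreducible] (f : σ.IntertwiningMap (restrictTL ρ))
    (hw_ne : w ≠ 0) {h : GL (Fin k) ℂ} (h_fix : ρ (embBR m k h) (f w) = f w) (y : W) :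
    ρ (embBR m k h) (f y) = f y := by
  let f' : σ.IntertwiningMap (restrictTL ρ) :=
    { toLinearMap := ρ (embBR m k h) ∘ₗ f.toLinearMap
      isIntertwining' g := by
        ext z
        have h_comm := congrArg ρ (embTL_commute_embBR g h).eq
        simp only [map_mul] at h_comm
        change ρ (embBR m k h) (f (σ g z)) = ρ (embTL m k g) (ρ (embBR m k h) (f z))
        rw [f.isIntertwining, ← Module.End.mul_apply, ← Module.End.mul_apply, h_comm]
        rfl }
  have h_eq : f' = f := intertwiningMap_eq_of_apply_eq hw_ne h_fix
  exact congrArg (fun φ : σ.IntertwiningMap (restrictTL ρ) => φ y) h_eq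

variable [FiniteDimensional ℂ V] [ρ.IsIrreducible]

theorem IsHighestWeightVector.apply_embBR_gapPerm (hv : IsHighestWeightVector ρ ω v)
    (hv_ne : v ≠ 0) (hω : Antitone ω) (hlen : lenPos ω + lenNeg ω ≤ m) (h : GL (Fin k) ℂ) :
    ρ (embBR m k h) (ρ (permGL (gapPerm m k (lenPos ω) (Nat.le_of_add_right_le hlen)))⁻¹ v) =
      ρ (permGL (gapPerm m k (lenPos ω) (Nat.le_of_add_right_le hlen)))⁻¹ v := by
  have : (restrictBR ρ).IsSemisimpleRepresentation :=
    hv.isSemisimpleRepresentation_comp hv_ne hω embBR_star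
  have h_hw := hv.restrictBR_permGL_inv (strictMono_gapPerm_natAdd (k := k)
    (hp := Nat.le_of_add_right_le hlen))
  simp only [gapPerm_natAdd_eq_zero hω hlen] at h_hw
  exact h_hw.apply_eq_self_of_weight_zero h

theorem IsHighestWeightVector.exists_smul_eq_of_invariant (hv : IsHighestWeightVector ρ ω v)
    (hv_ne : v ≠ 0) (hω : Antitone ω) (hlen : lenPos ω + lenNeg ω ≤ m)
    (hx : IsWeightVector (restrictTL ρ) (restrWeight m k ω) x)
    (h_fix : ∀ h, ρ (embBR m k h) x = x) :
    ∃ c : ℂ, c • ρ (permGL (gapPerm m k (lenPos ω) (Nat.le_of_add_right_le hlen)))⁻¹ v = x := by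
  let s := gapPerm m k (lenPos ω) (Nat.le_of_add_right_le hlen)
  rw [restrWeight_eq_gapPerm hω hlen] at hx
  have hx_weight : IsWeightVector ρ (ω ∘ s) x := by
    refine isWeightVector_of_restrictTL_of_restrictBR hx fun t => ?_
    rw [MonoidHom.comp_apply, h_fix]
    simp [s, gapPerm_natAdd_eq_zero hω hlen]
  have hy_weight : IsWeightVector ρ ω (ρ (permGL s) x) := by
    have h_inv := hx_weight.apply_permGL_inv s⁻¹
    rwa [map_inv permGL, inv_inv, Function.comp_assoc, Equiv.Perm.inv_def,
      Equiv.self_comp_symm] at h_inv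
  have h_mem : ρ (permGL s) x ∈ cyclicSubrep ρ v := by
    rw [cyclicSubrep_eq_top hv_ne]
    trivial
  obtain ⟨c, hc⟩ := hv.exists_smul_eq_of_mem_cyclicSubrep hy_weight h_mem
  refine ⟨c, ?_⟩
  rw [← map_smul, hc, ← Module.End.mul_apply, ← map_mul, inv_mul_cancel, map_one,
    Module.End.one_apply]

variable [FiniteDimensional ℂ W] [σ.IsIrreducible]

theorem exists_invariant_intertwiningMap (hω : Antitone ω) (hlen : lenPos ω + lenNeg ω ≤ m)
    (hv : IsHighestWeightVector ρ ω v) (hv_ne : v ≠ 0)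
    (hw : IsHighestWeightVector σ (restrWeight m k ω) w) (hw_ne : w ≠ 0) :
    ∃ f₀ : σ.IntertwiningMap (restrictTL ρ), f₀ ≠ 0 ∧ (∀ h y, ρ (embBR m k h) (f₀ y) = f₀ y) ∧
      ∀ f : σ.IntertwiningMap (restrictTL ρ), (∀ h y, ρ (embBR m k h) (f y) = f y) →
        ∃ c : ℂ, f = c • f₀ := by
  have : (restrictTL ρ).IsSemisimpleRepresentation :=
    hv.isSemisimpleRepresentation_comp hv_ne hω embTL_star
  let s := gapPerm m k (lenPos ω) (Nat.le_of_add_right_le hlen)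
  have hu : IsHighestWeightVector (restrictTL ρ) (restrWeight m k ω) (ρ (permGL s)⁻¹ v) := by
    rw [restrWeight_eq_gapPerm hω hlen]
    exact hv.restrictTL_permGL_inv strictMono_gapPerm_castAdd
  have hu_ne : ρ (permGL s)⁻¹ v ≠ 0 := fun h_zero =>
    hv_ne ((Representation.apply_bijective ρ _).injective (h_zero.trans (map_zero _).symm))
  obtain ⟨f₀, hf₀⟩ := hw.exists_intertwiningMap_apply_eq hw_ne hu (hu.isAtom_cyclicSubrep hu_ne)
  refine ⟨f₀, ?_, fun h => ?_, fun f hf => ?_⟩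
  · rintro rfl
    exact hu_ne hf₀.symm
  · refine apply_embBR_eq_self_of_apply_eq f₀ hw_ne ?_
    rw [hf₀]
    exact hv.apply_embBR_gapPerm hv_ne hω hlen h
  · have hfw : IsWeightVector (restrictTL ρ) (restrWeight m k ω) (f w) := fun t => by
      rw [← f.isIntertwining, hw.isWeightVector, map_smul]
    obtain ⟨c, hc⟩ := hv.exists_smul_eq_of_invariant hv_ne hω hlen hfw (hf · w)
    refine ⟨c, intertwiningMap_eq_of_apply_eq hw_ne ?_⟩
    rw [Representation.IntertwiningMap.smul_apply, hf₀, hc]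

end Branching

/-- The representation given by a homomorphism into the group of invertible operators. -/
abbrev unitsRep {K G V : Type*} [Field K] [Monoid G] [AddCommGroup V] [Module K V]
    (ρ : G →* (V →ₗ[K] V)ˣ) : Representation K G V :=
  (Units.coeHom (Module.End K V)).comp ρ

namespace IsHWRep

variable {n : ℕ} {V : Type*} [AddCommGroup V] [Module ℂ V] {ω : Fin n → ℤ}
  {ρ : GL (Fin n) ℂ →* (V →ₗ[ℂ] V)ˣ}

theorem exists_isHighestWeightVector (hρ : IsHWRep n ρ ω) :
    ∃ v ≠ 0, IsHighestWeightVector (unitsRep ρ) ω v := by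
  obtain ⟨v, hv_ne, hv_fix, hv_weight⟩ := hρ.exists_hw
  exact ⟨v, hv_ne, hv_weight, fun i j hij a => hv_fix _
    ⟨transvection_apply_self hij.ne a, Matrix.blockTriangular_transvection hij.le a⟩⟩

theorem isIrreducible (hρ : IsHWRep n ρ ω) : (unitsRep ρ).IsIrreducible := by
  obtain ⟨v, hv_ne, -⟩ := hρ.exists_hw
  have : Nontrivial V := ⟨v, 0, hv_ne⟩
  exact isIrreducible_of_forall_submodule hρ.irred

end IsHWRep

/-- **Branching multiplicity one.**  Let `(λ⁺, λ⁻)` be a bipartition with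
`ℓ(λ⁺) + ℓ(λ⁻) ≤ m < n`, encoded by the dominant weight `ω` of `GL_n(ℂ)`
(`n = m + k`, `k > 0`).  The restriction of `V_n(λ⁺,λ⁻)` to
`GL_m(ℂ) × GL_{n-m}(ℂ)` contains `V_m(λ⁺,λ⁻) ⊗ (trivial)` with multiplicity exactly
one: for any model `(W, σ)` of `V_m(λ⁺,λ⁻)`, the space of maps `W →ₗ V` which are
`GL_m(ℂ)`-equivariant and whose image is `GL_{n-m}(ℂ)`-invariant is one-dimensional. -/
theorem branching_multiplicity_one (m k : ℕ) (hk : 0 < k) (ω : Fin (m + k) → ℤ)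
    (hlen : lenPos ω + lenNeg ω ≤ m)
    (V : Type*) [AddCommGroup V] [Module ℂ V]
    (ρ : GL (Fin (m + k)) ℂ →* (V →ₗ[ℂ] V)ˣ) (hρ : IsHWRep (m + k) ρ ω)
    (W : Type*) [AddCommGroup W] [Module ℂ W]
    (σ : GL (Fin m) ℂ →* (W →ₗ[ℂ] W)ˣ) (hσ : IsHWRep m σ (restrWeight m k ω)) :
    ∃ f₀ : W →ₗ[ℂ] V, f₀ ≠ 0 ∧
      (∀ (g : GL (Fin m) ℂ) (w : W),
        f₀ ((σ g : W →ₗ[ℂ] W) w) = (ρ (embTL m k g) : V →ₗ[ℂ] V) (f₀ w)) ∧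
      (∀ (h : GL (Fin k) ℂ) (w : W),
        (ρ (embBR m k h) : V →ₗ[ℂ] V) (f₀ w) = f₀ w) ∧
      ∀ f : W →ₗ[ℂ] V,
        (∀ (g : GL (Fin m) ℂ) (w : W),
          f ((σ g : W →ₗ[ℂ] W) w) = (ρ (embTL m k g) : V →ₗ[ℂ] V) (f w)) →
        (∀ (h : GL (Fin k) ℂ) (w : W),
          (ρ (embBR m k h) : V →ₗ[ℂ] V) (f w) = f w) →
        ∃ c : ℂ, f = c • f₀ := by
  have := hρ.finite
  have := hσ.finite
  have := hρ.isIrreducible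
  have := hσ.isIrreducible
  obtain ⟨v, hv_ne, hv⟩ := hρ.exists_isHighestWeightVector
  obtain ⟨w, hw_ne, hw⟩ := hσ.exists_isHighestWeightVector
  obtain ⟨f₀, hf₀_ne, hf₀_fix, hf₀_unique⟩ :=
    exists_invariant_intertwiningMap hρ.dominant hlen hv hv_ne hw hw_ne
  refine ⟨f₀.toLinearMap, fun h_zero => hf₀_ne ?_, f₀.isIntertwining, hf₀_fix,
    fun f hf hf_fix => ?_⟩
  · exact Representation.IntertwiningMap.toLinearMap_injective _ _ h_zero
  · obtain ⟨c, hc⟩ := hf₀_unique ⟨f, fun g => LinearMap.ext (hf g)⟩ hf_fix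
    exact ⟨c, congrArg Representation.IntertwiningMap.toLinearMap hc⟩
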